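/- arXiv:2509.02231 — 7 statements merged into one kernel-verified Lean document; each statement's English description precedes it below -/
import Mathlib

section
/- For every generalised Heisenberg group G there exists an automorphism ψ of G such that for every finite generating set S of G, the formal power series Σ_{n≥0} gr_{ψ,G}^S(n) x^n ∈ ℚ⟦x⟧ is transcendental over the field of rational functions ℚ(x) (in particular, it is not a rational function). -/
/-- Word norm with respect to a finite generating set (inverses of generators allowed). -/
noncomputable def wordNorm {G : Type*} [Group G] (S : Finset G) (g : G) : ℕ :=
  sInf {n | ∃ l : List G, l.length = n ∧ (∀ x ∈ l, x ∈ S ∨ x⁻¹ ∈ S) ∧ l.prod = g}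

/-- `x` and `y` are `ψ`-twisted conjugate. -/
def TwistedConj {G : Type*} [Group G] (ψ : G ≃* G) (x y : G) : Prop :=
  ∃ g : G, g * x * (ψ g)⁻¹ = y

/-- The twisted conjugacy growth function: number of `ψ`-twisted conjugacy classes
with a representative of word norm at most `n`. -/
noncomputable def twistedGrowth {G : Type*} [Group G] (ψ : G ≃* G) (S : Finset G) (n : ℕ) : ℕ :=
  Set.ncard ((fun x => {y | TwistedConj ψ x y}) '' {g : G | wordNorm S g ≤ n})

def GrowthLE (f g : ℕ → ℝ) : Prop :=
  ∃ c : ℕ, 0 < c ∧ ∀ n : ℕ, max 1 (f n) ≤ c * max 1 (g (c * n))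

def GrowthEquiv (f g : ℕ → ℝ) : Prop := GrowthLE f g ∧ GrowthLE g f


section PartA
open Filter Topology

/-- Key asymptotic lemma. -/
lemma no_poly_relation (L : ℝ → ℝ) (hL : Tendsto L (𝓝[>] 0) atTop)
    (hL2 : ∀ j : ℕ, Tendsto (fun t => t * L t ^ j) (𝓝[>] 0) (𝓝 0))
    (Q : Polynomial (Polynomial ℝ)) (hQ : Q ≠ 0)
    (h : ∀ᶠ t in 𝓝[>] (0:ℝ), ((Q.map (Polynomial.evalRingHom t)).eval (L t)) = 0) : False := by
  have hX : ¬ IsUnit (Polynomial.C (Polynomial.X : Polynomial ℝ)) := by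
    rw [Polynomial.isUnit_C]
    exact Polynomial.not_isUnit_X
  obtain ⟨n, a, hna, rfl⟩ := WfDvdMonoid.max_power_factor' hQ hX
  set R : Polynomial ℝ := a.map (Polynomial.evalRingHom 0) with hR
  have hR0 : R ≠ 0 := by
    intro h0
    apply hna
    rw [Polynomial.C_dvd_iff_dvd_coeff]
    intro i
    rw [Polynomial.X_dvd_iff, Polynomial.coeff_zero_eq_eval_zero]
    have := congrArg (fun p => Polynomial.coeff p i) h0
    simpa [hR, Polynomial.coeff_map] using this
  have h1 : ∀ᶠ t in 𝓝[>] (0:ℝ), ((a.map (Polynomial.evalRingHom t)).eval (L t)) = 0 := by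
    filter_upwards [h, self_mem_nhdsWithin] with t ht htpos
    have htpos : 0 < t := htpos
    simp only [Polynomial.map_mul, Polynomial.map_pow, Polynomial.map_C, Polynomial.eval_mul,
      Polynomial.eval_pow, Polynomial.eval_C, Polynomial.coe_evalRingHom, Polynomial.eval_X] at ht
    exact (mul_eq_zero.1 ht).resolve_left (pow_ne_zero _ htpos.ne')
  have h2 : Tendsto (fun t => (a.map (Polynomial.evalRingHom t)).eval (L t) - R.eval (L t))
      (𝓝[>] 0) (𝓝 0) := by
    have hs : ∀ t y : ℝ, (a.map (Polynomial.evalRingHom t)).eval y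
        = ∑ j ∈ Finset.range (a.natDegree + 1), (a.coeff j).eval t * y ^ j := by
      intro t y
      rw [Polynomial.eval_map, Polynomial.eval₂_eq_sum_range]
      simp
    have : ∀ t, (a.map (Polynomial.evalRingHom t)).eval (L t) - R.eval (L t)
        = ∑ j ∈ Finset.range (a.natDegree + 1), (a.coeff j).divX.eval t * (t * L t ^ j) := by
      intro t
      rw [hR, hs, hs, ← Finset.sum_sub_distrib]
      refine Finset.sum_congr rfl fun j _ => ?_
      have e := congrArg (Polynomial.eval t) (Polynomial.divX_mul_X_add (a.coeff j))
      simp only [Polynomial.eval_add, Polynomial.eval_mul, Polynomial.eval_X,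
        Polynomial.eval_C] at e
      rw [← e, Polynomial.coeff_zero_eq_eval_zero]
      ring
    simp_rw [this]
    have hz : ∑ j ∈ Finset.range (a.natDegree + 1), (a.coeff j).divX.eval 0 * (0:ℝ) = 0 := by simp
    refine Eq.subst (motive := fun y => Tendsto _ _ (𝓝 y)) hz ?_
    refine tendsto_finsetSum _ fun j _ => Tendsto.mul ?_ (by simpa using hL2 j)
    exact ((a.coeff j).divX.continuous.tendsto 0).mono_left nhdsWithin_le_nhds
  have h3 : Tendsto (fun t => R.eval (L t)) (𝓝[>] 0) (𝓝 0) := by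
    have := h2.neg
    rw [neg_zero] at this
    refine this.congr' ?_
    filter_upwards [h1] with t ht
    rw [ht]; ring
  by_cases hd : 0 < R.degree
  · have h4 := (R.abs_tendsto_atTop hd).comp hL
    have h5 := h3.abs
    exact not_tendsto_nhds_of_tendsto_atTop h4 _ h5
  · have hc := Polynomial.eq_C_of_degree_le_zero (not_lt.1 hd)
    rw [hc] at h3
    simp only [Polynomial.eval_C] at h3
    have := tendsto_nhds_unique h3 tendsto_const_nhds
    apply hR0
    rw [hc, ← this]; simp

/-- evaluation predicate of a rational power series at a real point -/
def Ev (x : ℝ) (f : PowerSeries ℚ) (v : ℝ) : Prop :=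
  HasSum (fun n => ((PowerSeries.coeff n f : ℚ) : ℝ) * x ^ n) v

lemma Ev.add {x v w : ℝ} {f g : PowerSeries ℚ} (hf : Ev x f v) (hg : Ev x g w) :
    Ev x (f + g) (v + w) := by
  unfold Ev at *
  convert HasSum.add hf hg using 2
  simp [add_mul]

lemma Ev.zero {x : ℝ} : Ev x 0 0 := by
  unfold Ev
  simp

lemma Ev.mul {x v w : ℝ} {f g : PowerSeries ℚ} (hf : Ev x f v) (hg : Ev x g w) :
    Ev x (f * g) (v * w) := by
  unfold Ev at *
  have sf := hf.summable.norm
  have sg := hg.summable.norm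
  have h1 := summable_norm_sum_mul_antidiagonal_of_summable_norm sf sg
  have h2 := tsum_mul_tsum_eq_tsum_sum_antidiagonal_of_summable_norm sf sg
  rw [hf.tsum_eq, hg.tsum_eq] at h2
  rw [h2]
  suffices key : (fun n => ((PowerSeries.coeff n (f * g) : ℚ) : ℝ) * x ^ n) =
      fun n => ∑ kl ∈ Finset.HasAntidiagonal.antidiagonal n,
        (((PowerSeries.coeff kl.1 f : ℚ) : ℝ) * x ^ kl.1) *
          (((PowerSeries.coeff kl.2 g : ℚ) : ℝ) * x ^ kl.2) by
    rw [key]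
    exact h1.of_norm.hasSum
  funext n
  rw [PowerSeries.coeff_mul]
  push_cast
  rw [Finset.sum_mul]
  refine Finset.sum_congr rfl fun kl hkl => ?_
  rw [← Finset.HasAntidiagonal.mem_antidiagonal.1 hkl, pow_add]
  ring

lemma Ev.poly (x : ℝ) (c : Polynomial ℚ) : Ev x (c : PowerSeries ℚ) (Polynomial.aeval x c) := by
  unfold Ev
  have : (Polynomial.aeval x c : ℝ) =
      ∑ n ∈ Finset.range (c.natDegree + 1), ((PowerSeries.coeff n (c : PowerSeries ℚ) : ℚ) : ℝ) * x ^ n := by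
    rw [Polynomial.aeval_eq_sum_range]
    simp [Algebra.smul_def]
  rw [this]
  apply hasSum_sum_of_ne_finset_zero
  intro n hn
  rw [Polynomial.coeff_coe, Polynomial.coeff_eq_zero_of_natDegree_lt]
  · simp
  · simpa using hn

lemma Ev.one {x : ℝ} : Ev x 1 1 := by
  simpa using Ev.poly x 1

lemma Ev.pow {x v : ℝ} {f : PowerSeries ℚ} (hf : Ev x f v) (n : ℕ) : Ev x (f ^ n) (v ^ n) := by
  induction n with
  | zero => simpa using Ev.one
  | succ n ih => rw [pow_succ, pow_succ]; exact ih.mul hf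

lemma Ev.sum {x : ℝ} {s : Finset ℕ} {f : ℕ → PowerSeries ℚ} {v : ℕ → ℝ}
    (h : ∀ i ∈ s, Ev x (f i) (v i)) : Ev x (∑ i ∈ s, f i) (∑ i ∈ s, v i) := by
  classical
  induction s using Finset.induction_on with
  | empty => simpa using Ev.zero
  | insert a s ha ih =>
    rw [Finset.sum_insert ha, Finset.sum_insert ha]
    exact (h a (by simp)).add (ih fun i hi => h i (by simp [hi]))

lemma Ev.unique {x v w : ℝ} {f : PowerSeries ℚ} (hf : Ev x f v) (hg : Ev x f w) : v = w :=
  HasSum.unique hf hg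

lemma transcendental_of_asymp (f : PowerSeries ℚ) (L : ℝ → ℝ)
    (hL : Tendsto L (𝓝[>] 0) atTop)
    (hL2 : ∀ j : ℕ, Tendsto (fun t => t * L t ^ j) (𝓝[>] 0) (𝓝 0))
    (hf : ∀ᶠ t in 𝓝[>] (0:ℝ), Ev (1 - t) f (L t / t ^ 3)) :
    Transcendental (Polynomial ℚ) f := by
  rintro ⟨P, hP0, hP⟩
  let θ : Polynomial ℚ →+* Polynomial ℝ :=
    (Polynomial.compRingHom (1 - Polynomial.X)).comp (Polynomial.mapRingHom (algebraMap ℚ ℝ))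
  have hθ : ∀ c t, (θ c).eval t = Polynomial.aeval (1 - t) c := by
    intro c t
    simp [θ, Polynomial.eval_comp, Polynomial.aeval_def, Polynomial.eval_map]
  have hθ0 : ∀ c, θ c = 0 → c = 0 := by
    intro c hc
    have : (((c.map (algebraMap ℚ ℝ)).comp (1 - Polynomial.X)).comp (1 - Polynomial.X)) = 0 := by
      have : (c.map (algebraMap ℚ ℝ)).comp (1 - Polynomial.X) = 0 := hc
      rw [this]; simp
    rw [Polynomial.comp_assoc] at this
    have h2 : ((1 - Polynomial.X : Polynomial ℝ)).comp (1 - Polynomial.X) = Polynomial.X := by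
      simp
    rw [h2, Polynomial.comp_X] at this
    exact (Polynomial.map_eq_zero _).1 this
  set J := P.natDegree with hJ
  let Q : Polynomial (Polynomial ℝ) :=
    ∑ j ∈ Finset.range (J + 1), Polynomial.monomial j (θ (P.coeff j) * Polynomial.X ^ (3 * (J - j)))
  have hQ0 : Q ≠ 0 := by
    intro h
    have h1 := congrArg (fun p => Polynomial.coeff p J) h
    simp only [Q, Polynomial.finsetSum_coeff, Polynomial.coeff_monomial, Finset.sum_ite_eq',
      Polynomial.coeff_zero] at h1
    simp at h1
    exact hP0 (Polynomial.leadingCoeff_eq_zero.1 (hθ0 _ h1))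
  refine no_poly_relation L hL hL2 Q hQ0 ?_
  filter_upwards [hf, self_mem_nhdsWithin] with t ht htpos
  have htpos : 0 < t := htpos
  have e1 : Ev (1 - t) (Polynomial.aeval f P)
      (∑ j ∈ Finset.range (J + 1), Polynomial.aeval (1 - t) (P.coeff j) * (L t / t ^ 3) ^ j) := by
    rw [Polynomial.aeval_eq_sum_range]
    refine Ev.sum fun j _ => ?_
    have : P.coeff j • f ^ j = (P.coeff j : PowerSeries ℚ) * f ^ j := by
      rw [Algebra.smul_def]; rfl
    rw [this]
    exact (Ev.poly _ _).mul (ht.pow j)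
  rw [hP] at e1
  have e2 := e1.unique Ev.zero
  have e3 : (Q.map (Polynomial.evalRingHom t)).eval (L t)
      = t ^ (3 * J) * ∑ j ∈ Finset.range (J + 1),
        Polynomial.aeval (1 - t) (P.coeff j) * (L t / t ^ 3) ^ j := by
    simp only [Q, Polynomial.map_sum, Polynomial.map_monomial, Polynomial.eval_finsetSum,
      Polynomial.eval_monomial, map_mul, Polynomial.coe_evalRingHom, hθ, map_pow,
      Polynomial.eval_X]
    rw [Finset.mul_sum]
    refine Finset.sum_congr rfl fun j hj => ?_
    have hj' : j ≤ J := by simpa [Nat.lt_succ_iff] using hj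
    have : t ^ (3 * J) = t ^ (3 * (J - j)) * (t ^ 3) ^ j := by
      rw [← pow_mul, ← pow_add]; congr 1; omega
    rw [this, div_pow]
    field_simp
  rw [e3, e2, mul_zero]

/-- Transcendence criterion: superquadratic but at most `n² log n` growth. -/
lemma transcendental_of_growth (a : ℕ → ℕ)
    (h1 : ∀ K : ℝ, ∃ N0 : ℕ, ∀ n ≥ N0, K * ((n:ℝ) + 1) ^ 2 ≤ a n)
    (h2 : ∃ C : ℝ, ∀ n : ℕ, (a n : ℝ) ≤ C * ((n:ℝ) + 1) ^ 2 * (1 + Real.log ((n:ℝ) + 1))) :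
    Transcendental (Polynomial ℚ) (PowerSeries.mk fun n => (a n : ℚ)) := by
  obtain ⟨C0, hC0⟩ := h2
  obtain ⟨C, hC, hCpos⟩ : ∃ C : ℝ, (∀ n : ℕ, (a n : ℝ) ≤ C * (((n + 2).choose 2 : ℕ) : ℝ) * (1 + Real.log ((n:ℝ) + 1))) ∧ 0 < C := by
    refine ⟨2 * max C0 1, fun n => (hC0 n).trans ?_, by positivity⟩
    have hl : 0 ≤ Real.log ((n:ℝ) + 1) := Real.log_nonneg (by linarith [n.cast_nonneg (α := ℝ)])
    gcongr ?_ * (1 + Real.log ((n:ℝ) + 1))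
    have : (((n + 2).choose 2 : ℕ) : ℝ) = (n + 2) * (n + 1) / 2 := by
      rw [Nat.cast_choose_two]; push_cast; ring
    rw [this]
    have h3 : C0 ≤ max C0 1 := le_max_left _ _
    have h4 : 1 ≤ max C0 1 := le_max_right _ _
    have : (0:ℝ) ≤ n := n.cast_nonneg
    calc C0 * ((n:ℝ) + 1) ^ 2 ≤ max C0 1 * ((n:ℝ) + 1) ^ 2 := by gcongr
      _ ≤ max C0 1 * ((n + 2) * (n + 1)) := by gcongr; nlinarith
      _ = _ := by ring
  -- pointwise bound
  have hpt : ∀ t : ℝ, 0 < t → t < 1 → ∀ n : ℕ, (a n : ℝ) * (1 - t) ^ n ≤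
      C * (1 + Real.log (1 / t)) * ((((n + 2).choose 2 : ℕ) : ℝ) * (1 - t) ^ n)
      + 3 * C * t * ((((n + 3).choose 3 : ℕ) : ℝ) * (1 - t) ^ n) := by
    intro t ht0 ht1 n
    have hx : 0 ≤ (1 - t) ^ n := pow_nonneg (by linarith) _
    have hn1 : (0:ℝ) < n + 1 := by positivity
    have hlog : Real.log ((n:ℝ) + 1) ≤ Real.log (1 / t) + (n + 1) * t := by
      have := Real.log_le_sub_one_of_pos (mul_pos hn1 ht0)
      rw [Real.log_mul hn1.ne' ht0.ne'] at this
      rw [one_div, Real.log_inv]; linarith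
    have hch : ((n:ℝ) + 1) * (((n + 2).choose 2 : ℕ) : ℝ) ≤ 3 * (((n + 3).choose 3 : ℕ) : ℝ) := by
      have h := Nat.add_one_mul_choose_eq (n + 2) 2
      have : (((n + 2 + 1) * (n + 2).choose 2 : ℕ) : ℝ) = (((n + 2 + 1).choose (2 + 1) * (2 + 1) : ℕ) : ℝ) := by
        exact_mod_cast h
      push_cast at this
      have h0 : (0:ℝ) ≤ (((n + 2).choose 2 : ℕ) : ℝ) := by positivity
      have e : n + 3 = n + 2 + 1 := rfl
      rw [e]
      nlinarith
    set c2 : ℝ := (((n + 2).choose 2 : ℕ) : ℝ)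
    set c3 : ℝ := (((n + 3).choose 3 : ℕ) : ℝ)
    have h0 : (0:ℝ) ≤ c2 := by positivity
    calc (a n : ℝ) * (1 - t) ^ n ≤ (C * c2 * (1 + Real.log ((n:ℝ) + 1))) * (1 - t) ^ n := by
          gcongr; exact hC n
      _ ≤ (C * c2 * (1 + (Real.log (1 / t) + (n + 1) * t))) * (1 - t) ^ n := by gcongr
      _ = C * (1 + Real.log (1 / t)) * (c2 * (1 - t) ^ n) + C * t * (((n + 1) * c2) * (1 - t) ^ n) := by ring
      _ ≤ C * (1 + Real.log (1 / t)) * (c2 * (1 - t) ^ n) + C * t * ((3 * c3) * (1 - t) ^ n) := by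
          gcongr
      _ = _ := by ring
  have hn : ∀ t : ℝ, 0 < t → t < 1 → ‖(1 - t : ℝ)‖ < 1 := by
    intro t h0 h1
    rw [Real.norm_eq_abs, abs_lt]; constructor <;> linarith
  have hg : ∀ (k : ℕ) (t : ℝ), 0 < t → t < 1 →
      HasSum (fun n : ℕ => (((n + k).choose k : ℕ) : ℝ) * (1 - t) ^ n) (1 / t ^ (k + 1)) := by
    intro k t h0 h1
    simpa using hasSum_choose_mul_geometric_of_norm_lt_one k (hn t h0 h1)
  have hsum : ∀ t : ℝ, 0 < t → t < 1 → Summable (fun n : ℕ => (a n : ℝ) * (1 - t) ^ n) := by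
    intro t h0 h1
    refine Summable.of_nonneg_of_le (fun n => ?_) (hpt t h0 h1)
      (((hg 2 t h0 h1).summable.mul_left _).add ((hg 3 t h0 h1).summable.mul_left _))
    have : 0 ≤ (1 - t) ^ n := pow_nonneg (by linarith) _
    positivity
  let F : ℝ → ℝ := fun t => ∑' n : ℕ, (a n : ℝ) * (1 - t) ^ n
  let L : ℝ → ℝ := fun t => t ^ 3 * F t
  have hup : ∀ t : ℝ, 0 < t → t < 1 → L t ≤ C * (4 + Real.log (1 / t)) := by
    intro t h0 h1
    have h := hasSum_le (hpt t h0 h1) (hsum t h0 h1).hasSum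
      (((hg 2 t h0 h1).mul_left _).add ((hg 3 t h0 h1).mul_left _))
    have h3 := mul_le_mul_of_nonneg_left h (pow_nonneg h0.le 3)
    refine h3.trans (le_of_eq ?_)
    field_simp
    ring
  have hnonneg : ∀ t : ℝ, 0 < t → t < 1 → 0 ≤ L t := by
    intro t h0 h1
    refine mul_nonneg (by positivity) (tsum_nonneg fun n => ?_)
    have : 0 ≤ (1 - t) ^ n := pow_nonneg (by linarith) _
    positivity
  have hIoo : ∀ᶠ t in 𝓝[>] (0:ℝ), 0 < t ∧ t < 1 := by
    exact Ioo_mem_nhdsGT one_pos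
  refine transcendental_of_asymp _ L ?_ ?_ ?_
  · rw [tendsto_atTop]
    intro b
    obtain ⟨N0, hN0⟩ := h1 (max b 0 + 1)
    set K := max b 0 + 1 with hK
    have hKpos : 0 < K := by positivity
    set A : ℝ := ∑ n ∈ Finset.range N0, (((n + 2).choose 2 : ℕ) : ℝ) with hA
    have hlow : ∀ t : ℝ, 0 < t → t < 1 → K - t ^ 3 * (K * A) ≤ L t := by
      intro t h0 h1
      have hx : ∀ n : ℕ, 0 ≤ (1 - t) ^ n := fun n => pow_nonneg (by linarith) _
      have s1 : HasSum (fun n : ℕ => if n ∈ Finset.range N0 then (((n + 2).choose 2 : ℕ) : ℝ) else 0) A := by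
        rw [hA]
        have := hasSum_sum_of_ne_finset_zero (L := SummationFilter.unconditional ℕ) (f := fun n : ℕ => if n ∈ Finset.range N0 then (((n + 2).choose 2 : ℕ) : ℝ) else 0) (s := Finset.range N0) (fun n hn => if_neg hn)
        convert this using 1
        exact Finset.sum_congr rfl fun n hn => (if_pos hn).symm
      have s2 := ((hg 2 t h0 h1).sub s1).mul_left K
      have := hasSum_le (fun n => ?_) s2 (hsum t h0 h1).hasSum
      · have h3 := mul_le_mul_of_nonneg_left this (pow_nonneg h0.le 3)
        have : t ^ 3 * (K * (1 / t ^ (2 + 1) - A)) = K - t ^ 3 * (K * A) := by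
          field_simp
        rw [← this]; exact h3
      · split_ifs with hmem
        · have hle : (1 - t) ^ n ≤ 1 := pow_le_one₀ (by linarith) (by linarith)
          have : (((n + 2).choose 2 : ℕ) : ℝ) * (1 - t) ^ n - (((n + 2).choose 2 : ℕ) : ℝ) ≤ 0 := by
            have : (0:ℝ) ≤ (((n + 2).choose 2 : ℕ) : ℝ) := by positivity
            nlinarith
          calc _ ≤ (0:ℝ) := mul_nonpos_of_nonneg_of_nonpos hKpos.le this
            _ ≤ _ := mul_nonneg (by positivity) (hx n)
        · have hh := hN0 n (by simpa using hmem)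
          have : (((n + 2).choose 2 : ℕ) : ℝ) = (n + 2) * (n + 1) / 2 := by
            rw [Nat.cast_choose_two]; push_cast; ring
          have h6 : (((n + 2).choose 2 : ℕ) : ℝ) ≤ ((n:ℝ) + 1) ^ 2 := by
            rw [this]
            have : (0:ℝ) ≤ n := n.cast_nonneg
            nlinarith
          rw [sub_zero, ← mul_assoc]
          refine mul_le_mul_of_nonneg_right (le_trans ?_ hh) (hx n)
          gcongr
    have hlim : Tendsto (fun t : ℝ => K - t ^ 3 * (K * A)) (𝓝[>] 0) (𝓝 K) := by
      have : Continuous (fun t : ℝ => K - t ^ 3 * (K * A)) := by fun_prop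
      have := (this.tendsto 0).mono_left (nhdsWithin_le_nhds (s := Set.Ioi 0))
      simpa using this
    have hbK : b < K := by
      have := le_max_left b 0
      linarith
    filter_upwards [hIoo, hlim.eventually (lt_mem_nhds hbK)] with t ht ht2
    exact ht2.le.trans (hlow t ht.1 ht.2)
  · intro j
    have hl : Tendsto (fun t : ℝ => (C * 2) ^ j * (t * Real.log (1 / t) ^ j)) (𝓝[>] 0) (𝓝 0) := by
      have h := (Real.isLittleO_pow_log_id_atTop (n := j)).tendsto_div_nhds_zero.comp
        (tendsto_inv_nhdsGT_zero (𝕜 := ℝ))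
      have := h.const_mul ((C * 2) ^ j)
      rw [mul_zero] at this
      refine this.congr fun t => ?_
      simp [mul_comm]
    refine squeeze_zero' ?_ ?_ hl
    · filter_upwards [hIoo] with t ht
      exact mul_nonneg ht.1.le (pow_nonneg (hnonneg t ht.1 ht.2) _)
    · have hlog : ∀ᶠ t in 𝓝[>] (0:ℝ), 4 ≤ Real.log (1 / t) := by
        have := Real.tendsto_log_atTop.comp (tendsto_inv_nhdsGT_zero (𝕜 := ℝ))
        have := this.eventually_ge_atTop 4
        simpa using this
      filter_upwards [hIoo, hlog] with t ht hlt
      have h3 : L t ≤ C * 2 * Real.log (1 / t) := by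
        have := hup t ht.1 ht.2
        nlinarith
      have h4 := pow_le_pow_left₀ (hnonneg t ht.1 ht.2) h3 j
      calc t * L t ^ j ≤ t * (C * 2 * Real.log (1 / t)) ^ j := by
            gcongr; exact ht.1.le
        _ = _ := by rw [mul_pow]; ring
  · filter_upwards [hIoo] with t ht
    have : L t / t ^ 3 = F t := by
      have := ht.1.ne'
      simp only [L]; field_simp
    rw [this]
    unfold Ev
    have := (hsum t ht.1 ht.2).hasSum
    simpa [F] using this

end PartA

section PartB

lemma exists_prime_finset (K : ℝ) : ∃ T : Finset ℕ, (∀ l ∈ T, l.Prime) ∧ K ≤ ∑ l ∈ T, 1 / (l:ℝ) := by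
  by_contra! hcon
  apply not_summable_one_div_on_primes
  refine summable_of_sum_le (c := max K 0) (fun n => Set.indicator_nonneg (fun _ _ => by positivity) _) fun u => ?_
  have h := hcon (u.filter Nat.Prime) (by simp)
  rw [Finset.sum_filter] at h
  refine le_trans (le_of_eq ?_) (h.le.trans (le_max_left _ _))
  refine Finset.sum_congr rfl fun l _ => ?_
  simp [Set.indicator_apply]

lemma sum_primes_le_gcd (T : Finset ℕ) (hT : ∀ l ∈ T, l.Prime) (g : ℕ) (hg : 0 < g) :
    ∑ l ∈ T, (if l ∣ g then l - 1 else 0) ≤ g := by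
  rw [← Finset.sum_filter]
  conv_rhs => rw [← Nat.sum_totient g]
  calc ∑ l ∈ T.filter (· ∣ g), (l - 1) = ∑ l ∈ T.filter (· ∣ g), Nat.totient l := by
        refine Finset.sum_congr rfl fun l hl => ?_
        rw [Nat.totient_prime (hT l (Finset.mem_filter.1 hl).1)]
    _ ≤ _ := by
        apply Finset.sum_le_sum_of_subset
        intro l hl
        rw [Nat.mem_divisors]
        exact ⟨(Finset.mem_filter.1 hl).2, hg.ne'⟩

lemma gcd_sum_lower (K : ℝ) : ∃ N0 : ℕ, ∀ N ≥ N0, K * (N:ℝ) ^ 2 ≤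
    ((∑ pq ∈ Finset.Ioc 0 N ×ˢ Finset.Ioc 0 N, Nat.gcd pq.1 pq.2 : ℕ) : ℝ) := by
  obtain ⟨T, hT, hK⟩ := exists_prime_finset (8 * K)
  refine ⟨T.sup id, fun N hN => ?_⟩
  have hTN : ∀ l ∈ T, l ≤ N := fun l hl => (Finset.le_sup (f := id) hl).trans hN
  have h1 : ∑ l ∈ T, (l - 1) * (N / l) ^ 2 ≤
      ∑ pq ∈ Finset.Ioc 0 N ×ˢ Finset.Ioc 0 N, Nat.gcd pq.1 pq.2 := by
    calc ∑ l ∈ T, (l - 1) * (N / l) ^ 2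
        = ∑ l ∈ T, ∑ pq ∈ Finset.Ioc 0 N ×ˢ Finset.Ioc 0 N,
          (if l ∣ Nat.gcd pq.1 pq.2 then l - 1 else 0) := by
          refine Finset.sum_congr rfl fun l _ => ?_
          rw [← Finset.sum_filter, Finset.sum_const, smul_eq_mul, mul_comm]
          congr 1
          have : (Finset.Ioc 0 N ×ˢ Finset.Ioc 0 N).filter (fun pq => l ∣ Nat.gcd pq.1 pq.2)
            = (Finset.Ioc 0 N).filter (l ∣ ·) ×ˢ (Finset.Ioc 0 N).filter (l ∣ ·) := by
            ext ⟨a, b⟩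
            simp only [Finset.mem_filter, Finset.mem_product, Nat.dvd_gcd_iff]
            tauto
          rw [this, Finset.card_product, Nat.Ioc_filter_dvd_card_eq_div, sq]
      _ = ∑ pq ∈ Finset.Ioc 0 N ×ˢ Finset.Ioc 0 N, ∑ l ∈ T,
          (if l ∣ Nat.gcd pq.1 pq.2 then l - 1 else 0) := Finset.sum_comm
      _ ≤ _ := by
          refine Finset.sum_le_sum fun pq hpq => sum_primes_le_gcd T hT _ ?_
          simp only [Finset.mem_product, Finset.mem_Ioc] at hpq
          exact Nat.gcd_pos_of_pos_left _ hpq.1.1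
  have h2 : K * (N:ℝ) ^ 2 ≤ ((∑ l ∈ T, (l - 1) * (N / l) ^ 2 : ℕ) : ℝ) := by
    calc K * (N:ℝ) ^ 2 ≤ (N:ℝ) ^ 2 / 8 * ∑ l ∈ T, 1 / (l:ℝ) := by
          have : (0:ℝ) ≤ (N:ℝ) ^ 2 / 8 := by positivity
          nlinarith
      _ = ∑ l ∈ T, (N:ℝ) ^ 2 / 8 * (1 / (l:ℝ)) := Finset.mul_sum _ _ _
      _ ≤ ∑ l ∈ T, (((l - 1) * (N / l) ^ 2 : ℕ) : ℝ) := by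
          refine Finset.sum_le_sum fun l hl => ?_
          have hl2 : 2 ≤ l := (hT l hl).two_le
          have hlN := hTN l hl
          have hd1 : 1 ≤ N / l := (Nat.one_le_div_iff (by omega)).2 hlN
          have hlt : N < l * (N / l + 1) := Nat.lt_mul_div_succ N (by omega)
          have hd : (N:ℝ) ≤ 2 * l * ((N / l : ℕ) : ℝ) := by
            have : N ≤ 2 * l * (N / l) := by nlinarith
            exact_mod_cast this
          have hlpos : (0:ℝ) < l := by positivity
          push_cast [Nat.cast_sub (show 1 ≤ l by omega)]
          have hl2' : (2:ℝ) ≤ l := by exact_mod_cast hl2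
          set D : ℝ := ((N / l : ℕ) : ℝ)
          have hD : 0 ≤ D := by positivity
          have : (N:ℝ) ^ 2 ≤ (2 * l * D) ^ 2 := by gcongr
          rw [mul_one_div, div_div, div_le_iff₀ (by positivity)]
          nlinarith [mul_nonneg (mul_nonneg hlpos.le (sq_nonneg D)) (sub_nonneg.2 hl2')]
      _ = _ := by push_cast; rfl
  exact h2.trans (by exact_mod_cast h1)

lemma card_multiples (N e : ℕ) (he : 0 < e) (heN : e ≤ N) :
    (((Finset.Icc (-(N:ℤ)) N).filter (fun x => (e:ℤ) ∣ x)).card : ℝ) ≤ 3 * (N / e : ℝ) := by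
  have h : ((Finset.Icc (-(N:ℤ)) N).filter (fun x => (e:ℤ) ∣ x)).card ≤
      (Finset.Icc (-((N / e : ℕ):ℤ)) ((N / e : ℕ) : ℤ)).card := by
    apply Finset.card_le_card_of_injOn (fun x => x / (e:ℤ))
    · intro x hx
      simp only [Finset.coe_filter, Finset.mem_Icc, Set.mem_ofPred_eq] at hx
      obtain ⟨⟨h1, h2⟩, c, rfl⟩ := hx
      have he' : (0:ℤ) < e := by exact_mod_cast he
      simp only [Finset.coe_Icc, Set.mem_Icc]
      rw [Int.mul_ediv_cancel_left _ he'.ne']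
      push_cast
      constructor
      · rw [neg_le, Int.le_ediv_iff_mul_le he']; linarith
      · rw [Int.le_ediv_iff_mul_le he']; linarith
    · intro x hx y hy hxy
      simp only [Finset.coe_filter, Finset.mem_Icc, Set.mem_ofPred_eq] at hx hy
      obtain ⟨_, c, rfl⟩ := hx
      obtain ⟨_, c', rfl⟩ := hy
      have he' : (0:ℤ) < e := by exact_mod_cast he
      simp only [Int.mul_ediv_cancel_left _ he'.ne'] at hxy
      rw [hxy]
  rw [Int.card_Icc] at h
  have h1 : 1 ≤ N / e := (Nat.one_le_div_iff he).2 heN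
  have h2 : ((Finset.Icc (-(N:ℤ)) N).filter (fun x => (e:ℤ) ∣ x)).card ≤ 3 * (N / e) := by omega
  calc _ ≤ ((3 * (N / e) : ℕ) : ℝ) := by exact_mod_cast h2
    _ ≤ _ := by
      push_cast
      gcongr
      exact Nat.cast_div_le

lemma gcd_sum_upper (N : ℕ) :
    ((∑ pq ∈ Finset.Icc (-(N:ℤ)) N ×ˢ Finset.Icc (-(N:ℤ)) N, Int.gcd pq.1 pq.2 : ℕ) : ℝ)
      ≤ 9 * (N:ℝ) ^ 2 * (1 + Real.log N) := by
  have h1 : ∀ pq ∈ Finset.Icc (-(N:ℤ)) N ×ˢ Finset.Icc (-(N:ℤ)) N, Int.gcd pq.1 pq.2 ≤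
      ∑ e ∈ Finset.Icc 1 N, (if (e:ℤ) ∣ pq.1 ∧ (e:ℤ) ∣ pq.2 then e else 0) := by
    rintro ⟨p, q⟩ hpq
    simp only [Finset.mem_product, Finset.mem_Icc] at hpq
    rcases Nat.eq_zero_or_pos (Int.gcd p q) with h0 | h0
    · simp [h0]
    · have hle : Int.gcd p q ≤ N := by
        by_cases hp : p = 0
        · have hq : q ≠ 0 := by rintro rfl; simp [hp] at h0
          have := Int.gcd_le_natAbs_right p hq
          omega
        · have := Int.gcd_le_natAbs_left q hp
          omega
      have := Finset.single_le_sum (f := fun e : ℕ => if (e:ℤ) ∣ p ∧ (e:ℤ) ∣ q then e else 0)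
        (fun _ _ => Nat.zero_le _) (Finset.mem_Icc.2 ⟨h0, hle⟩)
      simpa [Int.gcd_dvd_left, Int.gcd_dvd_right] using this
  have h2 := Finset.sum_le_sum h1
  rw [Finset.sum_comm] at h2
  calc _ ≤ ((∑ e ∈ Finset.Icc 1 N, ∑ pq ∈ Finset.Icc (-(N:ℤ)) N ×ˢ Finset.Icc (-(N:ℤ)) N,
      (if (e:ℤ) ∣ pq.1 ∧ (e:ℤ) ∣ pq.2 then e else 0) : ℕ) : ℝ) := by exact_mod_cast h2
    _ = ∑ e ∈ Finset.Icc 1 N, (e:ℝ) *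
        (((Finset.Icc (-(N:ℤ)) N).filter (fun x => (e:ℤ) ∣ x)).card : ℝ) ^ 2 := by
      push_cast
      refine Finset.sum_congr rfl fun e _ => ?_
      rw [← Finset.sum_filter, Finset.sum_const, Finset.filter_product, Finset.card_product]
      simp only [nsmul_eq_mul]
      push_cast
      ring
    _ ≤ ∑ e ∈ Finset.Icc 1 N, 9 * (N:ℝ) ^ 2 * (e:ℝ)⁻¹ := by
      refine Finset.sum_le_sum fun e he => ?_
      rw [Finset.mem_Icc] at he
      have he0 : (0:ℝ) < e := by exact_mod_cast he.1
      calc _ ≤ (e:ℝ) * (3 * (N / e : ℝ)) ^ 2 := by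
            gcongr
            exact card_multiples N e he.1 he.2
        _ = _ := by field_simp; ring
    _ = 9 * (N:ℝ) ^ 2 * (harmonic N : ℝ) := by
      rw [← Finset.mul_sum, harmonic_eq_sum_Icc]
      push_cast
      rfl
    _ ≤ _ := by
      gcongr
      exact harmonic_le_one_add_log N

end PartB

section PartC

lemma wordNorm_le_length {G : Type*} [Group G] (S : Finset G) (l : List G)
    (hl : ∀ x ∈ l, x ∈ S ∨ x⁻¹ ∈ S) : wordNorm S l.prod ≤ l.length :=
  Nat.sInf_le ⟨l, rfl, hl, rfl⟩

lemma exists_word {G : Type*} [Group G] (S : Finset G) (hS : Subgroup.closure (S : Set G) = ⊤)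
    (g : G) : ∃ l : List G, l.length = wordNorm S g ∧ (∀ x ∈ l, x ∈ S ∨ x⁻¹ ∈ S) ∧ l.prod = g := by
  have hne : {n | ∃ l : List G, l.length = n ∧ (∀ x ∈ l, x ∈ S ∨ x⁻¹ ∈ S) ∧ l.prod = g}.Nonempty := by
    have : g ∈ Subgroup.closure (S : Set G) := by rw [hS]; trivial
    rw [← Subgroup.mem_toSubmonoid, Subgroup.closure_toSubmonoid] at this
    obtain ⟨l, h1, h2⟩ := Submonoid.exists_list_of_mem_closure this
    exact ⟨l.length, l, rfl, by simpa using h1, h2⟩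
  exact Nat.sInf_mem hne

lemma wordNorm_mul_le {G : Type*} [Group G] (S : Finset G)
    (hS : Subgroup.closure (S : Set G) = ⊤) (g h : G) :
    wordNorm S (g * h) ≤ wordNorm S g + wordNorm S h := by
  obtain ⟨l, h1, h2, rfl⟩ := exists_word S hS g
  obtain ⟨m, h3, h4, rfl⟩ := exists_word S hS h
  rw [← h1, ← h3, ← List.length_append, ← List.prod_append]
  apply wordNorm_le_length
  intro x hx
  rcases List.mem_append.1 hx with hx | hx
  · exact h2 x hx
  · exact h4 x hx

lemma wordNorm_pow_le {G : Type*} [Group G] (S : Finset G)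
    (hS : Subgroup.closure (S : Set G) = ⊤) (g : G) (n : ℕ) :
    wordNorm S (g ^ n) ≤ n * wordNorm S g := by
  induction n with
  | zero => simpa using wordNorm_le_length S [] (by simp)
  | succ n ih =>
    rw [pow_succ]
    have := wordNorm_mul_le S hS (g ^ n) g
    nlinarith

/-- linear bound for homs to the integers -/
lemma hom_linear_bound {G : Type*} [Group G] (S : Finset G) (φ : G → ℤ)
    (hφ : ∀ g h, φ (g * h) = φ g + φ h) :
    ∃ C : ℕ, ∀ l : List G, (∀ x ∈ l, x ∈ S ∨ x⁻¹ ∈ S) → |φ l.prod| ≤ C * l.length := by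
  refine ⟨∑ s ∈ S, (φ s).natAbs, fun l => ?_⟩
  have h1 : φ 1 = 0 := by have := hφ 1 1; rw [mul_one] at this; omega
  have hinv : ∀ g, φ g⁻¹ = - φ g := by
    intro g
    have := hφ g g⁻¹; rw [mul_inv_cancel, h1] at this; omega
  have hS : ∀ s ∈ S, |φ s| ≤ ((∑ s ∈ S, (φ s).natAbs : ℕ) : ℤ) := by
    intro s hs
    have := Finset.single_le_sum (f := fun s => (φ s).natAbs) (fun _ _ => Nat.zero_le _) hs
    rw [Int.abs_eq_natAbs]
    exact_mod_cast this
  set C := ∑ s ∈ S, (φ s).natAbs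
  induction l with
  | nil => intro _; simp [h1]
  | cons a l ih =>
    intro hl
    have h2 := ih fun x hx => hl x (List.mem_cons_of_mem _ hx)
    have h3 : |φ a| ≤ C := by
      rcases hl a (List.mem_cons_self) with h | h
      · exact hS a h
      · have := hS _ h
        rwa [hinv, abs_neg] at this
    rw [List.prod_cons, hφ, List.length_cons]
    have := abs_add_le (φ a) (φ l.prod)
    push_cast
    linarith

lemma ncard_image_le_of_invariant {α β γ : Type*} (cls : α → β) (J : α → γ) (A : Set α)
    (F : Finset γ) (hJ : ∀ x ∈ A, J x ∈ F)
    (h : ∀ x ∈ A, ∀ y ∈ A, J x = J y → cls x = cls y) :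
    (cls '' A).Finite ∧ (cls '' A).ncard ≤ F.card := by
  classical
  rcases A.eq_empty_or_nonempty with rfl | ⟨a0, ha0⟩
  · simp
  have : ∃ r : β → γ, ∀ b ∈ cls '' A, ∃ x ∈ A, cls x = b ∧ r b = J x := by
    refine ⟨fun b => if hb : b ∈ cls '' A then J hb.choose else J a0, fun b hb => ?_⟩
    exact ⟨hb.choose, hb.choose_spec.1, hb.choose_spec.2, by simp only [dif_pos hb]⟩
  obtain ⟨r, hr⟩ := this
  have hmaps : ∀ b ∈ cls '' A, r b ∈ (F : Set γ) := by
    intro b hb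
    obtain ⟨x, hx, _, hx3⟩ := hr b hb
    rw [hx3]; exact hJ x hx
  have hinj : Set.InjOn r (cls '' A) := by
    intro b hb b' hb' hbb
    obtain ⟨x, hx, hx2, hx3⟩ := hr b hb
    obtain ⟨y, hy, hy2, hy3⟩ := hr b' hb'
    rw [← hx2, ← hy2]
    exact h x hx y hy (by rw [← hx3, ← hy3, hbb])
  refine ⟨Set.Finite.of_injOn hmaps hinj F.finite_toSet, ?_⟩
  have := Set.ncard_le_ncard_of_injOn r hmaps hinj F.finite_toSet
  rwa [Set.ncard_coe_finset] at this

/-- Coordinates on a generalised Heisenberg group with a split hyperbolic plane. -/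
structure HData (G V : Type*) [Group G] [AddCommGroup V] where
  π : G → V
  κ : G → ℤ
  inj : ∀ g h, π g = π h → κ g = κ h → g = h
  surj : ∀ x k, ∃ g, π g = x ∧ κ g = k
  B : V →ₗ[ℤ] V →ₗ[ℤ] ℤ
  π_mul : ∀ g h, π (g * h) = π g + π h
  κ_mul : ∀ g h, κ (g * h) = κ g + κ h + B (π g) (π h)
  p : V →ₗ[ℤ] ℤ
  q : V →ₗ[ℤ] ℤ
  u : V
  u' : V
  d : ℕ
  hd : 0 < d
  pu : p u = 1
  qu : q u = 0
  pu' : p u' = 0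
  qu' : q u' = 1
  ωu : ∀ x, B u x - B x u = d * q x
  ωu' : ∀ x, B u' x - B x u' = -(d * p x)
  T : V →ₗ[ℤ] V
  hT : ∀ x, T x = (2 * p x) • u + (2 * q x) • u' - x
  hB : ∀ x y, B (T x) (T y) = B x y

namespace HData
variable {G V : Type*} [Group G] [AddCommGroup V] (D : HData G V)

lemma pT (x : V) : D.p (D.T x) = D.p x := by
  rw [D.hT]; simp [D.pu, D.pu']; ring
lemma qT (x : V) : D.q (D.T x) = D.q x := by
  rw [D.hT]; simp [D.qu, D.qu']; ring
lemma TT (x : V) : D.T (D.T x) = x := by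
  rw [D.hT (D.T x), D.pT, D.qT, D.hT x]; abel

noncomputable def e : G ≃ V × ℤ :=
  Equiv.ofBijective (fun g => (D.π g, D.κ g)) ⟨fun g h hgh => by
    simp only [Prod.mk.injEq] at hgh
    exact D.inj g h hgh.1 hgh.2, fun ⟨x, k⟩ => by
    obtain ⟨g, h1, h2⟩ := D.surj x k
    exact ⟨g, by simp [h1, h2]⟩⟩

lemma π_symm (x : V × ℤ) : D.π (D.e.symm x) = x.1 :=
  congrArg Prod.fst (D.e.apply_symm_apply x)
lemma κ_symm (x : V × ℤ) : D.κ (D.e.symm x) = x.2 :=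
  congrArg Prod.snd (D.e.apply_symm_apply x)

noncomputable def ψ : G ≃* G where
  toFun g := D.e.symm (D.T (D.π g), D.κ g)
  invFun g := D.e.symm (D.T (D.π g), D.κ g)
  left_inv g := by
    apply D.inj <;> simp [D.π_symm, D.κ_symm, D.TT]
  right_inv g := by
    apply D.inj <;> simp [D.π_symm, D.κ_symm, D.TT]
  map_mul' g h := by
    apply D.inj <;> simp [D.π_symm, D.κ_symm, D.π_mul, D.κ_mul, D.hB]

lemma π_ψ (g : G) : D.π (D.ψ g) = D.T (D.π g) := D.π_symm _
lemma κ_ψ (g : G) : D.κ (D.ψ g) = D.κ g := D.κ_symm _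

def μ (g : G) : ℤ := 2 * D.κ g - D.B (D.π g) (D.π g)

lemma μ_mul (g h : G) : D.μ (g * h) = D.μ g + D.μ h + (D.B (D.π g) (D.π h) - D.B (D.π h) (D.π g)) := by
  simp only [μ, D.π_mul, D.κ_mul, map_add, LinearMap.add_apply]; ring

lemma key_identity (x v : V) :
    2 * (D.B v x - D.B (x + (v - D.T v)) (D.T v)) -
      (D.B (x + (v - D.T v)) (x + (v - D.T v)) - D.B x x)
      = 2 * D.d * (D.p v * D.q x - D.q v * D.p x) := by
  have h1 := D.hB v v
  have hvt : v + D.T v = (2 * D.p v) • D.u + (2 * D.q v) • D.u' := by rw [D.hT]; abel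
  have h2 : D.B (v + D.T v) x - D.B x (v + D.T v) = 2 * D.d * (D.p v * D.q x - D.q v * D.p x) := by
    rw [hvt]
    simp only [map_add, LinearMap.add_apply, map_smul, LinearMap.smul_apply, smul_eq_mul]
    linear_combination 2 * D.p v * D.ωu x + 2 * D.q v * D.ωu' x
  have h3 : D.B v (v + D.T v) - D.B (v + D.T v) v = 0 := by
    rw [hvt]
    simp only [map_add, LinearMap.add_apply, map_smul, LinearMap.smul_apply, smul_eq_mul]
    linear_combination -2 * D.p v * D.ωu v - 2 * D.q v * D.ωu' v
  simp only [map_add, map_sub, LinearMap.add_apply, LinearMap.sub_apply] at *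
  linear_combination h2 - h3 + h1

lemma twisted_iff (x y : G) : TwistedConj D.ψ x y ↔ ∃ v : V, D.π y = D.π x + (v - D.T v) ∧
    D.μ y - D.μ x = 2 * D.d * (D.p v * D.q (D.π x) - D.q v * D.p (D.π x)) := by
  have hk : ∀ v, D.π y = D.π x + (v - D.T v) →
      ((D.κ y = D.κ x + D.B v (D.π x) - D.B (D.π y) (D.T v)) ↔
        D.μ y - D.μ x = 2 * D.d * (D.p v * D.q (D.π x) - D.q v * D.p (D.π x))) := by
    intro v hv
    have := D.key_identity (D.π x) v
    rw [← hv] at this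
    simp only [μ]
    constructor <;> intro h <;> linarith
  have hg : ∀ g, g * x * (D.ψ g)⁻¹ = y ↔ D.π y = D.π x + (D.π g - D.T (D.π g)) ∧
      D.κ y = D.κ x + D.B (D.π g) (D.π x) - D.B (D.π y) (D.T (D.π g)) := by
    intro g
    rw [mul_inv_eq_iff_eq_mul]
    constructor
    · intro h
      have h1 := congrArg D.π h
      have h2 := congrArg D.κ h
      simp only [D.π_mul, D.κ_mul, D.π_ψ, D.κ_ψ] at h1 h2
      refine ⟨?_, by linarith⟩
      rw [← add_sub_assoc, add_comm (D.π x), h1]; abel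
    · rintro ⟨h1, h2⟩
      apply D.inj
      · rw [D.π_mul, D.π_mul, D.π_ψ, h1]; abel
      · rw [D.κ_mul, D.κ_mul, D.π_ψ, D.κ_ψ, h2]; ring
  constructor
  · rintro ⟨g, h⟩
    obtain ⟨h1, h2⟩ := (hg g).1 h
    exact ⟨D.π g, h1, (hk _ h1).1 h2⟩
  · rintro ⟨v, h1, h2⟩
    obtain ⟨g, rfl, -⟩ := D.surj v 0
    exact ⟨g, (hg g).2 ⟨h1, (hk _ h1).2 h2⟩⟩

lemma twisted_forward {x y : G} (h : TwistedConj D.ψ x y) :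
    D.p (D.π y) = D.p (D.π x) ∧ D.q (D.π y) = D.q (D.π x) ∧
      (2 * D.d * Int.gcd (D.p (D.π x)) (D.q (D.π x)) : ℤ) ∣ D.μ y - D.μ x := by
  obtain ⟨v, h1, h2⟩ := (D.twisted_iff x y).1 h
  refine ⟨by simp [h1, D.pT], by simp [h1, D.qT], ?_⟩
  rw [h2]
  refine mul_dvd_mul_left _ (dvd_sub ?_ ?_)
  · exact Dvd.dvd.mul_left (Int.gcd_dvd_right _ _) _
  · exact Dvd.dvd.mul_left (Int.gcd_dvd_left _ _) _

lemma twisted_backward {x y : G} (hp : D.p (D.π y) = D.p (D.π x))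
    (hq : D.q (D.π y) = D.q (D.π x)) (hw : ∃ w, D.π y = D.π x + (2:ℤ) • w)
    (hμ : (2 * D.d * Int.gcd (D.p (D.π x)) (D.q (D.π x)) : ℤ) ∣ D.μ y - D.μ x) :
    TwistedConj D.ψ x y := by
  obtain ⟨w, hw⟩ := hw
  obtain ⟨c, hc⟩ := hμ
  have hpw : D.p w = 0 := by
    rw [hw] at hp; simpa using hp
  have hqw : D.q w = 0 := by
    rw [hw] at hq; simpa using hq
  rw [D.twisted_iff]
  rw [Int.gcd_eq_gcd_ab] at hc
  set P := D.p (D.π x)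
  set Q := D.q (D.π x)
  refine ⟨w + (Int.gcdB P Q * c) • D.u + (-(Int.gcdA P Q * c)) • D.u', ?_, ?_⟩
  · rw [hw, D.hT]
    simp only [map_add, map_smul, hpw, hqw, D.pu, D.qu, D.pu', D.qu', smul_eq_mul]
    module
  · simp only [map_add, map_smul, hpw, hqw, D.pu, D.qu, D.pu', D.qu', smul_eq_mul]
    rw [hc]; ring

lemma cls_eq {x y : G} (ψ : G ≃* G) (h : TwistedConj ψ x y) :
    {z | TwistedConj ψ x z} = {z | TwistedConj ψ y z} := by
  obtain ⟨g, rfl⟩ := h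
  ext z
  constructor
  · rintro ⟨k, rfl⟩
    exact ⟨k * g⁻¹, by simp [mul_assoc]⟩
  · rintro ⟨k, rfl⟩
    exact ⟨k * g, by simp [mul_assoc]⟩

lemma of_cls_eq {x y : G} (ψ : G ≃* G)
    (h : {z | TwistedConj ψ x z} = {z | TwistedConj ψ y z}) : TwistedConj ψ x y := by
  have : y ∈ {z | TwistedConj ψ y z} := ⟨1, by simp⟩
  rw [← h] at this
  exact this

lemma μ_bound (S : Finset G) : ∃ C : ℕ, ∀ l : List G, (∀ x ∈ l, x ∈ S ∨ x⁻¹ ∈ S) →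
    |D.μ l.prod| ≤ C * ((l.length : ℤ) + 1) ^ 2 := by
  classical
  have h1 : D.π 1 = 0 := by
    have := D.π_mul 1 1; rw [mul_one] at this; simpa using this
  have hμ1 : D.μ 1 = 0 := by
    have := D.μ_mul 1 1; rw [mul_one, h1] at this; simp at this; exact this
  have hb : ∀ t : G, ∃ C : ℕ, ∀ l : List G, (∀ x ∈ l, x ∈ S ∨ x⁻¹ ∈ S) →
      |D.B (D.π t) (D.π l.prod) - D.B (D.π l.prod) (D.π t)| ≤ C * l.length := by
    intro t
    refine hom_linear_bound S (fun g => D.B (D.π t) (D.π g) - D.B (D.π g) (D.π t)) ?_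
    intro g h
    simp only [D.π_mul, map_add, LinearMap.add_apply]; ring
  choose Ct hCt using hb
  set S' : Finset G := S ∪ S.image (·⁻¹) with hS'
  have hmem : ∀ t, (t ∈ S ∨ t⁻¹ ∈ S) → t ∈ S' := by
    intro t ht
    rw [hS', Finset.mem_union, Finset.mem_image]
    rcases ht with h | h
    · exact Or.inl h
    · exact Or.inr ⟨_, h, inv_inv t⟩
  set C := ∑ t ∈ S', ((D.μ t).natAbs + Ct t) with hC
  have hCt' : ∀ t ∈ S', (D.μ t).natAbs + Ct t ≤ C := by
    intro t ht
    exact Finset.single_le_sum (f := fun t => (D.μ t).natAbs + Ct t) (fun _ _ => Nat.zero_le _) ht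
  refine ⟨C, fun l => ?_⟩
  induction l with
  | nil => intro _; simp [hμ1]
  | cons a l ih =>
    intro hl
    have hl' : ∀ x ∈ l, x ∈ S ∨ x⁻¹ ∈ S := fun x hx => hl x (List.mem_cons_of_mem _ hx)
    have h2 := ih hl'
    have h3 := hCt a l hl'
    have h4 := hCt' a (hmem a (hl a List.mem_cons_self))
    rw [List.prod_cons, D.μ_mul, List.length_cons]
    have h5 := abs_add_le (D.μ a + D.μ l.prod) (D.B (D.π a) (D.π l.prod) - D.B (D.π l.prod) (D.π a))
    have h6 := abs_add_le (D.μ a) (D.μ l.prod)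
    have h7 : |D.μ a| ≤ C := by rw [Int.abs_eq_natAbs]; exact_mod_cast (by omega)
    have h8 : (Ct a : ℤ) ≤ C := by exact_mod_cast (by omega)
    have hn : (0:ℤ) ≤ l.length := by positivity
    have h9 : (Ct a : ℤ) * l.length ≤ C * l.length := by gcongr
    have hC0 : (0:ℤ) ≤ C := by positivity
    push_cast
    nlinarith

lemma even_diff {ι : Type*} [Fintype ι] (b : Module.Basis ι ℤ V) (x y : V)
    (h : (fun i => ((b.repr x i : ℤ) : ZMod 2)) = fun i => ((b.repr y i : ℤ) : ZMod 2)) :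
    ∃ w, y = x + (2:ℤ) • w := by
  have : ∀ i, ∃ c : ℤ, b.repr y i - b.repr x i = 2 * c := by
    intro i
    have := congrFun h i
    rw [ZMod.intCast_eq_intCast_iff_dvd_sub] at this
    exact this
  choose c hc using this
  refine ⟨∑ i, c i • b i, b.ext_elem fun i => ?_⟩
  rw [map_add, map_smul, Finsupp.add_apply, Finsupp.smul_apply, b.repr_sum_self, smul_eq_mul, ← hc]
  ring

lemma finite_and_upper {ι : Type*} [Fintype ι] (b : Module.Basis ι ℤ V)
    (S : Finset G) (hS : Subgroup.closure (S : Set G) = ⊤) :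
    ∃ C : ℕ, 0 < C ∧ ∀ n : ℕ,
      ((fun x => {y | TwistedConj D.ψ x y}) '' {g : G | wordNorm S g ≤ n}).Finite ∧
      twistedGrowth D.ψ S n ≤ C * ((∑ pq ∈ Finset.Icc (-((C * (n + 1) : ℕ):ℤ)) (C * (n + 1) : ℕ) ×ˢ
        Finset.Icc (-((C * (n + 1) : ℕ):ℤ)) (C * (n + 1) : ℕ), Int.gcd pq.1 pq.2) + (n + 1) ^ 2) := by
  classical
  obtain ⟨C1, hC1⟩ := hom_linear_bound S (fun g => D.p (D.π g)) (fun g h => by simp [D.π_mul])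
  obtain ⟨C2, hC2⟩ := hom_linear_bound S (fun g => D.q (D.π g)) (fun g h => by simp [D.π_mul])
  obtain ⟨C3, hC3⟩ := D.μ_bound S
  set r := Fintype.card (ι → ZMod 2) with hr
  set C := C1 + C2 + r * (2 * D.d) + r * (2 * C3 + 1) + 1 with hC
  refine ⟨C, by omega, fun n => ?_⟩
  set N : ℕ := C * (n + 1) with hN
  set M : ℕ := C3 * (n + 1) ^ 2 with hM
  let E : ℤ × ℤ → Finset ℤ := fun pq =>
    Finset.Ico (0:ℤ) (2 * D.d * Int.gcd pq.1 pq.2) ∪ (if pq = 0 then Finset.Icc (-(M:ℤ)) M else ∅)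
  let PQ := Finset.Icc (-(N:ℤ)) N ×ˢ Finset.Icc (-(N:ℤ)) N
  let F : Finset ((ℤ × ℤ) × ((ι → ZMod 2) × ℤ)) :=
    PQ.biUnion fun pq => {pq} ×ˢ (Finset.univ ×ˢ E pq)
  let J : G → (ℤ × ℤ) × ((ι → ZMod 2) × ℤ) := fun g =>
    ((D.p (D.π g), D.q (D.π g)), (fun i => ((b.repr (D.π g) i : ℤ) : ZMod 2)),
      D.μ g % (2 * D.d * Int.gcd (D.p (D.π g)) (D.q (D.π g))))
  have hd : (0:ℤ) < D.d := by exact_mod_cast D.hd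
  have hJ : ∀ g ∈ {g : G | wordNorm S g ≤ n}, J g ∈ F := by
    intro g hg
    have hg : wordNorm S g ≤ n := hg
    obtain ⟨l, h1, h2, rfl⟩ := exists_word S hS g
    rw [← h1] at hg
    have b1 := hC1 l h2
    have b2 := hC2 l h2
    have b3 := hC3 l h2
    have hgZ : (l.length : ℤ) ≤ n := by exact_mod_cast hg
    have hl0 : (0 : ℤ) ≤ l.length := by positivity
    have hCC1 : (C1 : ℤ) ≤ C := by exact_mod_cast (by omega)
    have hCC2 : (C2 : ℤ) ≤ C := by exact_mod_cast (by omega)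
    have b1' : |D.p (D.π l.prod)| ≤ N := b1.trans (by
      rw [hN]; push_cast
      exact mul_le_mul hCC1 (by linarith) (by positivity) (by positivity))
    have b2' : |D.q (D.π l.prod)| ≤ N := b2.trans (by
      rw [hN]; push_cast
      exact mul_le_mul hCC2 (by linarith) (by positivity) (by positivity))
    have b3' : |D.μ l.prod| ≤ M := b3.trans (by
      rw [hM]; push_cast
      gcongr)
    rw [abs_le] at b1' b2' b3'
    simp only [F, J, PQ, Finset.mem_biUnion, Finset.mem_product, Finset.mem_singleton,
      Finset.mem_univ, true_and]
    refine ⟨(D.p (D.π l.prod), D.q (D.π l.prod)), by simp [b1', b2'], rfl, ?_⟩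
    simp only [E]
    rw [Finset.mem_union]
    by_cases h0 : Int.gcd (D.p (D.π l.prod)) (D.q (D.π l.prod)) = 0
    · right
      rw [h0]
      rw [Int.gcd_eq_zero_iff] at h0
      rw [if_pos (by rw [h0.1, h0.2]; rfl)]
      simp [b3']
    · left
      have : (0:ℤ) < 2 * D.d * Int.gcd (D.p (D.π l.prod)) (D.q (D.π l.prod)) := by
        have : (0:ℤ) < Int.gcd (D.p (D.π l.prod)) (D.q (D.π l.prod)) := by
          exact_mod_cast Nat.pos_of_ne_zero h0
        positivity
      rw [Finset.mem_Ico]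
      exact ⟨Int.emod_nonneg _ this.ne', Int.emod_lt_of_pos _ this⟩
  have hcls : ∀ x ∈ {g : G | wordNorm S g ≤ n}, ∀ y ∈ {g : G | wordNorm S g ≤ n}, J x = J y →
      {z | TwistedConj D.ψ x z} = {z | TwistedConj D.ψ y z} := by
    intro x _ y _ hxy
    simp only [J, Prod.mk.injEq] at hxy
    obtain ⟨⟨h1, h2⟩, h3, h4⟩ := hxy
    refine cls_eq _ (D.twisted_backward h1.symm h2.symm (even_diff b _ _ h3) ?_)
    rw [← h1, ← h2] at h4
    exact Int.ModEq.dvd h4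
  obtain ⟨hfin, hle⟩ := ncard_image_le_of_invariant (fun x => {y | TwistedConj D.ψ x y}) J
    {g : G | wordNorm S g ≤ n} F hJ hcls
  refine ⟨hfin, hle.trans ?_⟩
  have hE : ∀ pq, (E pq).card ≤ 2 * D.d * Int.gcd pq.1 pq.2 + (if pq = 0 then 2 * M + 1 else 0) := by
    intro pq
    refine (Finset.card_union_le _ _).trans (add_le_add ?_ ?_)
    · rw [Int.card_Ico]; apply le_of_eq; 
      rw [sub_zero]; exact_mod_cast Int.toNat_natCast (2 * D.d * Int.gcd pq.1 pq.2)
    · split_ifs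
      · rw [Int.card_Icc]; omega
      · simp
  calc F.card ≤ ∑ pq ∈ PQ, (({pq} : Finset (ℤ × ℤ)) ×ˢ ((Finset.univ : Finset (ι → ZMod 2)) ×ˢ E pq)).card :=
        Finset.card_biUnion_le
    _ ≤ ∑ pq ∈ PQ, r * (2 * D.d * Int.gcd pq.1 pq.2 + (if pq = 0 then 2 * M + 1 else 0)) := by
        refine Finset.sum_le_sum fun pq _ => ?_
        rw [Finset.card_product, Finset.card_product, Finset.card_singleton, one_mul, Finset.card_univ]
        exact Nat.mul_le_mul_left _ (hE pq)
    _ = r * (2 * D.d) * (∑ pq ∈ PQ, Int.gcd pq.1 pq.2) + r * (2 * M + 1) := by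
        rw [← Finset.mul_sum, Finset.sum_add_distrib, ← Finset.mul_sum, Finset.sum_ite_eq' PQ 0,
          if_pos (by simp [PQ]), mul_add]
        ring
    _ ≤ C * (∑ pq ∈ PQ, Int.gcd pq.1 pq.2) + C * (n + 1) ^ 2 := by
        refine add_le_add (Nat.mul_le_mul_right _ (by omega)) ?_
        have : r * (2 * M + 1) ≤ r * (2 * C3 + 1) * (n + 1) ^ 2 := by
          rw [hM, mul_assoc]
          refine Nat.mul_le_mul_left _ ?_
          nlinarith [Nat.one_le_pow 2 (n + 1) (by omega)]
        exact this.trans (Nat.mul_le_mul_right _ (by omega))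
    _ = _ := by ring

lemma π_pow (g : G) (n : ℕ) : D.π (g ^ n) = (n:ℤ) • D.π g := by
  induction n with
  | zero =>
    have := D.π_mul 1 1; rw [mul_one] at this
    simpa using this
  | succ n ih => rw [pow_succ, D.π_mul, ih]; push_cast; module

lemma lower {S : Finset G} (hS : Subgroup.closure (S : Set G) = ⊤)
    (hfin : ∀ n : ℕ, ((fun x => {y | TwistedConj D.ψ x y}) '' {g : G | wordNorm S g ≤ n}).Finite) :
    ∃ C : ℕ, 0 < C ∧ ∀ n : ℕ,
      ∑ pq ∈ Finset.Ioc 0 (n / C) ×ˢ Finset.Ioc 0 (n / C), Nat.gcd pq.1 pq.2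
        ≤ twistedGrowth D.ψ S n := by
  obtain ⟨gu, hgu, -⟩ := D.surj D.u 0
  obtain ⟨gu', hgu', -⟩ := D.surj D.u' 0
  obtain ⟨z, hz, hz1⟩ := D.surj 0 1
  set C := wordNorm S gu + wordNorm S gu' + wordNorm S z + 1 with hC
  refine ⟨C, by omega, fun n => ?_⟩
  set N := n / C with hN
  have hNC : N * C ≤ n := Nat.div_mul_le_self n C
  let F := (Finset.Ioc 0 N ×ˢ Finset.Ioc 0 N).sigma fun pq => Finset.range (Nat.gcd pq.1 pq.2)
  let rep : (Σ _ : ℕ × ℕ, ℕ) → G := fun t => gu ^ t.1.1 * gu' ^ t.1.2 * z ^ t.2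
  have hcard : F.card = ∑ pq ∈ Finset.Ioc 0 N ×ˢ Finset.Ioc 0 N, Nat.gcd pq.1 pq.2 := by
    simp [F, Finset.card_sigma]
  have hπ : ∀ t, D.π (rep t) = (t.1.1 : ℤ) • D.u + (t.1.2 : ℤ) • D.u' := by
    intro t
    simp only [rep, D.π_mul, D.π_pow, hgu, hgu', hz, smul_zero, add_zero]
  have hμz : ∀ (g : G) (k : ℕ), D.μ (g * z ^ k) = D.μ g + 2 * k := by
    intro g k
    induction k with
    | zero => simp
    | succ k ih =>
      rw [pow_succ, ← mul_assoc, D.μ_mul, ih, hz]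
      simp only [μ, hz, hz1]
      simp; ring
  have hp : ∀ t, D.p (D.π (rep t)) = t.1.1 := by
    intro t; rw [hπ]; simp [D.pu, D.pu']
  have hq : ∀ t, D.q (D.π (rep t)) = t.1.2 := by
    intro t; rw [hπ]; simp [D.qu, D.qu']
  rw [← hcard]
  have hmaps : ∀ t ∈ (F : Set (Σ _ : ℕ × ℕ, ℕ)), {y | TwistedConj D.ψ (rep t) y} ∈
      ((fun x => {y | TwistedConj D.ψ x y}) '' {g : G | wordNorm S g ≤ n}) := by
    rintro ⟨⟨P, Q⟩, k⟩ ht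
    simp only [F, Finset.mem_coe, Finset.mem_sigma, Finset.mem_product, Finset.mem_Ioc,
      Finset.mem_range] at ht
    refine ⟨rep ⟨⟨P, Q⟩, k⟩, ?_, rfl⟩
    have hk : k ≤ N := (ht.2.le.trans (Nat.gcd_le_left _ ht.1.1.1)).trans ht.1.1.2
    change wordNorm S (gu ^ P * gu' ^ Q * z ^ k) ≤ n
    have h1 := wordNorm_mul_le S hS (gu ^ P * gu' ^ Q) (z ^ k)
    have h2 := wordNorm_mul_le S hS (gu ^ P) (gu' ^ Q)
    have h3 := wordNorm_pow_le S hS gu P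
    have h4 := wordNorm_pow_le S hS gu' Q
    have h5 := wordNorm_pow_le S hS z k
    have h6 := Nat.mul_le_mul_right (wordNorm S gu) ht.1.1.2
    have h7 := Nat.mul_le_mul_right (wordNorm S gu') ht.1.2.2
    have h8 := Nat.mul_le_mul_right (wordNorm S z) hk
    rw [hC] at hNC
    nlinarith
  have hinj : Set.InjOn (fun t => {y | TwistedConj D.ψ (rep t) y}) (F : Set (Σ _ : ℕ × ℕ, ℕ)) := by
    rintro ⟨⟨P, Q⟩, k⟩ ht ⟨⟨P', Q'⟩, k'⟩ ht' heq
    obtain ⟨h1, h2, h3⟩ := D.twisted_forward (of_cls_eq _ heq)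
    rw [hp, hp] at h1
    rw [hq, hq] at h2
    simp only [Nat.cast_inj] at h1 h2
    subst h1 h2
    rw [hp, hq] at h3
    simp only [rep, hμz] at h3
    simp only [F, Finset.mem_coe, Finset.mem_sigma, Finset.mem_range] at ht ht'
    have h4 : ((Nat.gcd P' Q' : ℕ) : ℤ) ∣ (k' : ℤ) - k := by
      have e : D.μ (gu ^ P' * gu' ^ Q') + 2 * (k':ℤ) - (D.μ (gu ^ P' * gu' ^ Q') + 2 * (k:ℤ))
        = 2 * ((k':ℤ) - k) := by ring
      rw [e, mul_assoc] at h3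
      have := (mul_dvd_mul_iff_left (two_ne_zero)).1 h3
      rw [Int.gcd_natCast_natCast] at this
      exact (Dvd.intro_left _ rfl).trans this
    have h5 : k = k' := by
      have := (Nat.modEq_iff_dvd (n := Nat.gcd P' Q') (a := k) (b := k')).2 h4
      exact Nat.ModEq.eq_of_lt_of_lt this ht.2 ht'.2
    rw [h5]
  have := Set.ncard_le_ncard_of_injOn _ hmaps hinj (hfin n)
  rwa [Set.ncard_coe_finset] at this

theorem transcendental {ι : Type*} [Fintype ι] (b : Module.Basis ι ℤ V)
    (S : Finset G) (hS : Subgroup.closure (S : Set G) = ⊤) :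
    Transcendental (Polynomial ℚ)
        (PowerSeries.mk fun n => (twistedGrowth D.ψ S n : ℚ)) := by
  obtain ⟨C, hC, hup⟩ := D.finite_and_upper b S hS
  obtain ⟨C', hC', hlow⟩ := D.lower hS (fun n => (hup n).1)
  apply transcendental_of_growth
  · intro K
    obtain ⟨N0, hN0⟩ := gcd_sum_lower (max K 0 * (4 * C' ^ 2))
    refine ⟨(N0 + 1) * C', fun n hn => ?_⟩
    have hN : N0 + 1 ≤ n / C' := (Nat.le_div_iff_mul_le hC').2 hn
    have h1 := hN0 (n / C') (by omega)
    have hlt : n < C' * (n / C' + 1) := Nat.lt_mul_div_succ n hC'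
    have h2 : n + 1 ≤ 2 * C' * (n / C') := by nlinarith
    have h3 : (n:ℝ) + 1 ≤ 2 * C' * ((n / C' : ℕ) : ℝ) := by exact_mod_cast h2
    calc K * ((n:ℝ) + 1) ^ 2 ≤ max K 0 * (2 * C' * ((n / C' : ℕ) : ℝ)) ^ 2 := by
          gcongr; exact le_max_left _ _
      _ = max K 0 * (4 * C' ^ 2) * ((n / C' : ℕ) : ℝ) ^ 2 := by ring
      _ ≤ _ := h1
      _ ≤ _ := by exact_mod_cast hlow n
  · refine ⟨C * (9 * C ^ 2 * (1 + Real.log C) + 1), fun n => ?_⟩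
    have h1 := (hup n).2
    have h2 := gcd_sum_upper (C * (n + 1))
    have hlC : 0 ≤ Real.log C := Real.log_nonneg (by exact_mod_cast hC)
    have hln : 0 ≤ Real.log ((n:ℝ) + 1) := Real.log_nonneg (by linarith [n.cast_nonneg (α := ℝ)])
    have hlog : Real.log ((C * (n + 1) : ℕ) : ℝ) = Real.log C + Real.log ((n:ℝ) + 1) := by
      push_cast
      rw [Real.log_mul (by positivity) (by positivity)]
    rw [hlog] at h2
    have h3 : (twistedGrowth D.ψ S n : ℝ) ≤ C * (9 * ((C * (n + 1) : ℕ) : ℝ) ^ 2 * (1 + (Real.log C + Real.log ((n:ℝ) + 1))) + ((n:ℝ) + 1) ^ 2) := by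
      have h1' := (Nat.cast_le (α := ℝ)).2 h1
      refine h1'.trans ?_
      rw [Nat.cast_mul, Nat.cast_add, Nat.cast_pow, Nat.cast_add, Nat.cast_one]
      gcongr
    refine h3.trans ?_
    have h4 : 1 + (Real.log C + Real.log ((n:ℝ) + 1)) ≤ (1 + Real.log C) * (1 + Real.log ((n:ℝ) + 1)) := by
      nlinarith [mul_nonneg hlC hln]
    calc _ ≤ (C:ℝ) * (9 * ((C * (n + 1) : ℕ) : ℝ) ^ 2 * ((1 + Real.log C) * (1 + Real.log ((n:ℝ) + 1))) + ((n:ℝ) + 1) ^ 2 * (1 + Real.log ((n:ℝ) + 1))) := by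
          gcongr
          have : (0:ℝ) ≤ ((n:ℝ) + 1) ^ 2 := by positivity
          nlinarith
      _ = _ := by push_cast; ring

end HData
end PartC
section PartD

lemma exists_half {V : Type*} [AddCommGroup V] {n : ℕ} (b : Module.Basis (Fin n) ℤ V)
    (ω : V →ₗ[ℤ] V →ₗ[ℤ] ℤ) (halt : ∀ x, ω x x = 0) :
    ∃ B0 : V →ₗ[ℤ] V →ₗ[ℤ] ℤ, ∀ x y, B0 x y - B0 y x = ω x y := by
  have hskew : ∀ x y, ω y x = - ω x y := by
    intro x y
    have := halt (x + y)
    simp only [map_add, LinearMap.add_apply, halt] at this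
    linarith
  obtain ⟨M, hM⟩ : ∃ M : Matrix (Fin n) (Fin n) ℤ, ∀ i j,
      M i j = if i < j then ω (b i) (b j) else 0 := ⟨fun i j => _, fun i j => rfl⟩
  refine ⟨Matrix.toLinearMap₂ b b M, ?_⟩
  have : Matrix.toLinearMap₂ b b M - (Matrix.toLinearMap₂ b b M).flip = ω := by
    refine LinearMap.ext_basis b b fun i j => ?_
    simp only [LinearMap.sub_apply, LinearMap.flip_apply, Matrix.toLinearMap₂_apply_basis, hM]
    rcases lt_trichotomy i j with h | h | h
    · simp [h, h.not_gt]
    · subst h; simp [halt]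
    · simp [h, h.not_gt, hskew (b i) (b j)]
  intro x y
  rw [← this]
  simp

lemma exists_split {V : Type*} [AddCommGroup V] {n : ℕ} (b : Module.Basis (Fin n) ℤ V)
    (ω : V →ₗ[ℤ] V →ₗ[ℤ] ℤ) (halt : ∀ x, ω x x = 0) (hne : ∃ x y, ω x y ≠ 0) :
    ∃ (B : V →ₗ[ℤ] V →ₗ[ℤ] ℤ) (p q : V →ₗ[ℤ] ℤ) (u u' : V) (d : ℕ) (T : V →ₗ[ℤ] V),
      (∀ x y, B x y - B y x = ω x y) ∧ 0 < d ∧ p u = 1 ∧ q u = 0 ∧ p u' = 0 ∧ q u' = 1 ∧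
      (∀ x, B u x - B x u = d * q x) ∧ (∀ x, B u' x - B x u' = -(d * p x)) ∧
      (∀ x, T x = (2 * p x) • u + (2 * q x) • u' - x) ∧ (∀ x y, B (T x) (T y) = B x y) := by
  classical
  have hskew : ∀ x y, ω y x = - ω x y := by
    intro x y
    have := halt (x + y)
    simp only [map_add, LinearMap.add_apply, halt] at this
    linarith
  have hex : ∃ n : ℕ, 0 < n ∧ ∃ x y, ω x y = n := by
    obtain ⟨x, y, hxy⟩ := hne
    rcases lt_or_gt_of_ne hxy with h | h
    · refine ⟨(ω x y).natAbs, by omega, y, x, ?_⟩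
      rw [hskew x y]; omega
    · exact ⟨(ω x y).natAbs, by omega, x, y, by omega⟩
  set d := Nat.find hex with hd
  obtain ⟨hdpos, u, u', huu⟩ := Nat.find_spec hex
  rw [← hd] at hdpos huu
  have hmin : ∀ x y, 0 ≤ ω x y → ω x y < d → ω x y = 0 := by
    intro x y h0 h1
    by_contra hne
    have := Nat.find_min hex (m := (ω x y).natAbs) (by omega)
    exact this ⟨by omega, x, y, by omega⟩
  have hdZ : (0:ℤ) < d := by exact_mod_cast hdpos
  have hq : ∀ x, ∃ c : ℤ, ω u x = d * c := by
    intro x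
    refine ⟨ω u x / d, ?_⟩
    have h := Int.emod_add_mul_ediv (ω u x) d
    have e : ω u (x - (ω u x / d) • u') = ω u x % d := by
      simp only [map_sub, map_smul, smul_eq_mul, huu]; linarith
    have := hmin u (x - (ω u x / d) • u') (by rw [e]; exact Int.emod_nonneg _ hdZ.ne')
      (by rw [e]; exact Int.emod_lt_of_pos _ hdZ)
    rw [e] at this
    linarith
  have hp : ∀ x, ∃ c : ℤ, ω x u' = d * c := by
    intro x
    refine ⟨ω x u' / d, ?_⟩
    have h := Int.emod_add_mul_ediv (ω x u') d
    have e : ω (x - (ω x u' / d) • u) u' = ω x u' % d := by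
      simp only [map_sub, map_smul, smul_eq_mul, huu, LinearMap.sub_apply, LinearMap.smul_apply]
      linarith
    have := hmin (x - (ω x u' / d) • u) u' (by rw [e]; exact Int.emod_nonneg _ hdZ.ne')
      (by rw [e]; exact Int.emod_lt_of_pos _ hdZ)
    rw [e] at this
    linarith
  choose p0 hp0 using hp
  choose q0 hq0 using hq
  let p : V →ₗ[ℤ] ℤ := (AddMonoidHom.mk' p0 (fun x y => by
    apply mul_left_cancel₀ hdZ.ne'
    rw [mul_add, ← hp0, ← hp0, ← hp0]; simp)).toIntLinearMap
  let q : V →ₗ[ℤ] ℤ := (AddMonoidHom.mk' q0 (fun x y => by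
    apply mul_left_cancel₀ hdZ.ne'
    rw [mul_add, ← hq0, ← hq0, ← hq0]; simp)).toIntLinearMap
  have hp : ∀ x, ω x u' = d * p x := hp0
  have hq : ∀ x, ω u x = d * q x := hq0
  have pu : p u = 1 := by
    apply mul_left_cancel₀ hdZ.ne'; rw [← hp, huu, mul_one]
  have qu : q u = 0 := by
    apply mul_left_cancel₀ hdZ.ne'; rw [← hq, halt, mul_zero]
  have pu' : p u' = 0 := by
    apply mul_left_cancel₀ hdZ.ne'; rw [← hp, halt, mul_zero]
  have qu' : q u' = 1 := by
    apply mul_left_cancel₀ hdZ.ne'; rw [← hq, huu, mul_one]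
  obtain ⟨B0, hB0⟩ := exists_half b ω halt
  let W : V →ₗ[ℤ] V := LinearMap.id - p.smulRight u - q.smulRight u'
  have hW : ∀ x, W x = x - p x • u - q x • u' := fun x => by simp [W]
  let T : V →ₗ[ℤ] V := (2 : ℤ) • p.smulRight u + (2 : ℤ) • q.smulRight u' - LinearMap.id
  have hT : ∀ x, T x = (2 * p x) • u + (2 * q x) • u' - x := fun x => by
    simp only [T, LinearMap.sub_apply, LinearMap.add_apply, LinearMap.smul_apply,
      LinearMap.smulRight_apply, LinearMap.id_apply]
    module
  let B : V →ₗ[ℤ] V →ₗ[ℤ] ℤ := LinearMap.mk₂ ℤ (fun x y => d * (p x * q y) + B0 (W x) (W y))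
    (fun x y z => by simp only [map_add, LinearMap.add_apply]; ring)
    (fun c x y => by simp only [map_smul, LinearMap.smul_apply, smul_eq_mul]; ring)
    (fun x y z => by simp only [map_add]; ring)
    (fun c x y => by simp only [map_smul, smul_eq_mul]; ring)
  have hB : ∀ x y, B x y = d * (p x * q y) + B0 (W x) (W y) := fun x y => rfl
  have hBω : ∀ x y, B x y - B y x = ω x y := by
    intro x y
    have h1 := hB0 (W x) (W y)
    have h2 : ω (W x) (W y) = ω x y - d * (p x * q y - q x * p y) := by
      rw [hW, hW]
      simp only [map_sub, map_smul, LinearMap.sub_apply, LinearMap.smul_apply, smul_eq_mul, halt,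
        hp, hq, hskew u x, hskew y u', pu, pu', qu, qu', hskew u u']
      ring
    rw [hB, hB]
    linarith
  refine ⟨B, p, q, u, u', d, T, hBω, hdpos, pu, qu, pu', qu', ?_, ?_, hT, ?_⟩
  · intro x; rw [hBω, hq]
  · intro x; rw [hBω, hskew x u', hp]
  · intro x y
    have hWT : ∀ x, W (T x) = - W x := by
      intro x
      rw [hW, hW, hT]
      simp only [map_add, map_sub, map_smul, smul_eq_mul, pu, pu', qu, qu']
      module
    have hpT : ∀ x, p (T x) = p x := by
      intro x; rw [hT]; simp only [map_add, map_sub, map_smul, smul_eq_mul, pu, pu']; ring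
    have hqT : ∀ x, q (T x) = q x := by
      intro x; rw [hT]; simp only [map_add, map_sub, map_smul, smul_eq_mul, qu, qu']; ring
    rw [hB, hB, hWT, hWT, hpT, hqT]
    simp

/-- A central extension of a free abelian group by `⟨z⟩` whose commutator form is the
antisymmetrisation of `B` has a section with cocycle `B`. -/
lemma exists_section {G V : Type*} [Group G] [AddCommGroup V] [Module.Free ℤ V]
    (π : G → V) (hπ : ∀ g h, π (g * h) = π g + π h) (hsurj : Function.Surjective π)
    (z : G) (hzc : ∀ g, z * g = g * z) (hπz : π z = 0)
    (B : V →ₗ[ℤ] V →ₗ[ℤ] ℤ)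
    (hcomm : ∀ g h, g * h = h * g * z ^ (B (π g) (π h) - B (π h) (π g))) :
    ∃ s : V → G, (∀ x, π (s x) = x) ∧ ∀ x y, s x * s y = s (x + y) * z ^ (B x y) := by
  have hzk : ∀ (k : ℤ) (g : G), z ^ k * g = g * z ^ k := fun k g =>
    ((show Commute z g from hzc g).zpow_left k).eq
  have hπ1 : π 1 = 0 := by have := hπ 1 1; rw [mul_one] at this; simpa using this
  have hπinv : ∀ g, π g⁻¹ = - π g := by
    intro g
    have := hπ g⁻¹ g; rw [inv_mul_cancel, hπ1] at this
    exact eq_neg_of_add_eq_zero_left this.symm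
  let πm : G →* Multiplicative V := MonoidHom.mk' (fun g => Multiplicative.ofAdd (π g))
    (fun g h => by rw [hπ]; rfl)
  have hπzk : ∀ k : ℤ, π (z ^ k) = 0 := by
    intro k
    have h : πm (z ^ k) = 1 := by
      rw [map_zpow]
      have : πm z = 1 := by change Multiplicative.ofAdd (π z) = 1; rw [hπz]; rfl
      rw [this, one_zpow]
    exact h
  letI iadd : Add G := ⟨fun g h => g * h * z ^ (-(B (π g) (π h)))⟩
  letI izero : Zero G := ⟨1⟩
  letI ineg : Neg G := ⟨fun g => g⁻¹ * z ^ (-(B (π g) (π g)))⟩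
  have add_def : ∀ g h : G, g + h = g * h * z ^ (-(B (π g) (π h))) := fun _ _ => rfl
  have zero_def : (0 : G) = 1 := rfl
  have neg_def : ∀ g : G, -g = g⁻¹ * z ^ (-(B (π g) (π g))) := fun _ => rfl
  have hπadd : ∀ g h : G, π (g + h) = π g + π h := by
    intro g h; rw [add_def, hπ, hπ, hπzk, add_zero]
  have hπneg : ∀ g : G, π (-g) = - π g := by
    intro g; rw [neg_def, hπ, hπzk, add_zero, hπinv]
  have hassoc : ∀ g h k : G, g + h + k = g + (h + k) := by
    intro g h k
    rw [add_def (g + h), add_def g (h + k), hπadd, hπadd, add_def g h, add_def h k]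
    have e1 : g * h * z ^ (-(B (π g) (π h))) * k * z ^ (-(B (π g + π h) (π k)))
        = g * h * k * z ^ (-(B (π g) (π h)) + -(B (π g + π h) (π k))) := by
      rw [zpow_add, mul_assoc (g * h), hzk]; simp only [mul_assoc]
    have e2 : g * (h * k * z ^ (-(B (π h) (π k)))) * z ^ (-(B (π g) (π h + π k)))
        = g * h * k * z ^ (-(B (π h) (π k)) + -(B (π g) (π h + π k))) := by
      rw [zpow_add]; simp only [mul_assoc]
    rw [e1, e2]
    congr 2
    simp only [map_add, LinearMap.add_apply]; ring
  have hcom : ∀ g h : G, g + h = h + g := by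
    intro g h
    rw [add_def, add_def, hcomm g h, mul_assoc, ← zpow_add]
    congr 2; ring
  have hzadd : ∀ g : G, 0 + g = g := by
    intro g; rw [add_def, zero_def, hπ1]; simp
  have hnadd : ∀ g : G, -g + g = 0 := by
    intro g
    rw [add_def, hπneg, neg_def, mul_assoc (g⁻¹), hzk, ← mul_assoc, inv_mul_cancel, one_mul,
      ← zpow_add, zero_def]
    simp
  letI : AddCommGroup G :=
    { add_assoc := hassoc
      zero_add := hzadd
      add_zero := fun g => by rw [hcom, hzadd]
      neg_add_cancel := hnadd
      add_comm := hcom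
      nsmul := nsmulRec
      zsmul := zsmulRec }
  let πl : G →ₗ[ℤ] V := (AddMonoidHom.mk' π hπadd).toIntLinearMap
  obtain ⟨s, hs⟩ := Module.projective_lifting_property πl LinearMap.id hsurj
  refine ⟨s, fun x => ?_, fun x y => ?_⟩
  · exact congrArg (fun f => f x) hs
  · have hx : ∀ x, π (s x) = x := fun x => congrArg (fun f => f x) hs
    rw [map_add]
    change s x * s y = (s x * s y * z ^ (-(B (π (s x)) (π (s y))))) * z ^ (B x y)
    rw [hx, hx, mul_assoc, ← zpow_add]
    simp

lemma exists_hdata {G V : Type*} [Group G] [AddCommGroup V] [Module.Free ℤ V] [Module.Finite ℤ V]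
    (π : G → V) (hπ : ∀ g h, π (g * h) = π g + π h) (hsurj : Function.Surjective π)
    (z : G) (hzc : ∀ g, z * g = g * z) (hker : ∀ g, π g = 0 ↔ ∃ k : ℤ, z ^ k = g)
    (hz : ∀ k : ℤ, z ^ k = 1 → k = 0) (hnc : ∃ g h : G, g * h ≠ h * g) :
    Nonempty (HData G V) := by
  have hzk : ∀ (k : ℤ) (g : G), z ^ k * g = g * z ^ k := fun k g =>
    ((show Commute z g from hzc g).zpow_left k).eq
  have hzinj : ∀ k l : ℤ, z ^ k = z ^ l → k = l := by
    intro k l h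
    have := hz (k - l) (by rw [zpow_sub, h, mul_inv_cancel])
    omega
  have hπ1 : π 1 = 0 := by have := hπ 1 1; rw [mul_one] at this; simpa using this
  have hπinv : ∀ g, π g⁻¹ = - π g := by
    intro g
    have := hπ g⁻¹ g; rw [inv_mul_cancel, hπ1] at this
    exact eq_neg_of_add_eq_zero_left this.symm
  have hπzk : ∀ k : ℤ, π (z ^ k) = 0 := fun k => (hker _).2 ⟨k, rfl⟩
  -- commutator exponent
  have hc : ∀ g h : G, ∃ k : ℤ, g * h = h * g * z ^ k := by
    intro g h
    have : π ((h * g)⁻¹ * (g * h)) = 0 := by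
      rw [hπ, hπinv, hπ, hπ]; abel
    obtain ⟨k, hk⟩ := (hker _).1 this
    exact ⟨k, by rw [hk]; group⟩
  choose c hc using hc
  have hcu : ∀ g h k, g * h = h * g * z ^ k → k = c g h := by
    intro g h k hk
    rw [hc g h] at hk
    exact (hzinj _ _ (mul_left_cancel hk)).symm
  have hcl : ∀ g g' h, c (g * g') h = c g h + c g' h := by
    intro g g' h
    symm; apply hcu
    calc g * g' * h = g * (g' * h) := by group
      _ = (g * h) * g' * z ^ (c g' h) := by rw [hc g' h]; simp only [mul_assoc]
      _ = h * g * (z ^ (c g h) * g') * z ^ (c g' h) := by rw [hc g h]; simp only [mul_assoc]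
      _ = h * (g * g') * z ^ (c g h + c g' h) := by rw [hzk, zpow_add]; simp only [mul_assoc]
  have hcs : ∀ g h, c g h = - c h g := by
    intro g h
    symm; apply hcu
    rw [hc h g, mul_assoc, ← zpow_add]; simp
  have hcz : ∀ (k : ℤ) (h : G), c (z ^ k) h = 0 := by
    intro k h
    symm; apply hcu; rw [hzk]; simp
  have hcr : ∀ g h h', c g (h * h') = c g h + c g h' := by
    intro g h h'
    rw [hcs, hcl, hcs h g, hcs h' g]; ring
  have hcπ : ∀ g g' h, π g = π g' → c g h = c g' h := by
    intro g g' h hgg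
    have : π (g'⁻¹ * g) = 0 := by rw [hπ, hπinv, hgg]; abel
    obtain ⟨k, hk⟩ := (hker _).1 this
    have : g = g' * z ^ k := by rw [hk]; group
    rw [this, hcl, hcz, add_zero]
  have hcπ2 : ∀ g h h', π h = π h' → c g h = c g h' := by
    intro g h h' hh
    rw [hcs, hcπ h h' g hh, ← hcs]
  choose σ hσ using hsurj
  let ω : V →ₗ[ℤ] V →ₗ[ℤ] ℤ := (AddMonoidHom.toIntLinearMap (AddMonoidHom.mk' (fun x =>
    (AddMonoidHom.mk' (fun y => c (σ x) (σ y)) (fun y y' => by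
      rw [← hcr]; apply hcπ2; rw [hπ, hσ, hσ, hσ])).toIntLinearMap) (fun x x' => by
      ext y
      change c (σ (x + x')) (σ y) = c (σ x) (σ y) + c (σ x') (σ y)
      rw [← hcl]; apply hcπ; rw [hπ, hσ, hσ, hσ])))
  have hω : ∀ g h, ω (π g) (π h) = c g h := by
    intro g h
    change c (σ (π g)) (σ (π h)) = c g h
    rw [hcπ _ g _ (hσ _), hcπ2 _ _ h (hσ _)]
  have halt : ∀ x, ω x x = 0 := by
    intro x
    rw [← hσ x, hω]
    have := hcs (σ x) (σ x)
    omega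
  have hne : ∃ x y, ω x y ≠ 0 := by
    obtain ⟨g, h, hgh⟩ := hnc
    refine ⟨π g, π h, fun h0 => hgh ?_⟩
    rw [hω] at h0
    rw [hc g h, h0]; simp
  obtain ⟨B, p, q, u, u', d, T, hBω, hd, pu, qu, pu', qu', ωu, ωu', hT, hB⟩ :=
    exists_split (Module.finBasis ℤ V) ω halt hne
  obtain ⟨s, hs1, hs2⟩ := exists_section π hπ (fun x => ⟨σ x, hσ x⟩) z hzc
    ((hker z).2 ⟨1, by simp⟩) B (fun g h => by rw [hBω, hω]; exact hc g h)
  have hκ : ∀ g, ∃ k : ℤ, g = s (π g) * z ^ k := by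
    intro g
    have : π ((s (π g))⁻¹ * g) = 0 := by rw [hπ, hπinv, hs1]; abel
    obtain ⟨k, hk⟩ := (hker _).1 this
    exact ⟨k, by rw [hk]; group⟩
  choose κ hκ using hκ
  have hκu : ∀ g k, g = s (π g) * z ^ k → κ g = k := by
    intro g k h
    apply hzinj
    apply mul_left_cancel (a := s (π g))
    rw [← hκ, ← h]
  exact ⟨{ π := π, κ := κ, B := B, p := p, q := q, u := u, u' := u', d := d, T := T
           π_mul := hπ, hd := hd, pu := pu, qu := qu, pu' := pu', qu' := qu'
           ωu := ωu, ωu' := ωu', hT := hT, hB := hB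
           inj := fun g h h1 h2 => by rw [hκ g, hκ h, h1, h2]
           surj := fun x k => by
            have h1 : π (s x * z ^ k) = x := by rw [hπ, hs1, hπzk, add_zero]
            exact ⟨s x * z ^ k, h1, hκu _ _ (by rw [h1])⟩
           κ_mul := fun g h => by
            apply hκu
            conv_lhs => rw [hκ g, hκ h]
            rw [hπ]
            calc s (π g) * z ^ κ g * (s (π h) * z ^ κ h)
                = s (π g) * (z ^ κ g * s (π h)) * z ^ κ h := by simp only [mul_assoc]
              _ = (s (π g) * s (π h)) * z ^ κ g * z ^ κ h := by rw [hzk]; simp only [mul_assoc]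
              _ = s (π g + π h) * (z ^ B (π g) (π h) * z ^ κ g * z ^ κ h) := by
                rw [hs2]; simp only [mul_assoc]
              _ = _ := by
                rw [← zpow_add, ← zpow_add]; congr 2; ring }⟩

end PartD

/-- On every generalised Heisenberg group there is an automorphism whose twisted
conjugacy growth series is transcendental over `ℚ(x)` (equivalently over `ℚ[x]`),
for every finite generating set. -/
theorem exists_automorphism_transcendental_series
    (G : Type*) [Group G]
    (hfg : Group.FG G)
    (htf : ∀ (g : G) (n : ℕ), 0 < n → g ^ n = 1 → g = 1)
    (h2step : commutator G ≤ Subgroup.center G)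
    (G2 : Subgroup G) [G2.Normal]
    (hG2 : ∀ g : G, g ∈ G2 ↔ ∃ n : ℕ, 0 < n ∧ g ^ n ∈ commutator G)
    (hcyc : IsCyclic G2) (hinf : Infinite G2) :
    ∃ ψ : G ≃* G, ∀ S : Finset G, Subgroup.closure (S : Set G) = ⊤ →
      Transcendental (Polynomial ℚ)
        (PowerSeries.mk fun n => (twistedGrowth ψ S n : ℚ)) := by
  have hcomG2 : ∀ g h : G, g * h * g⁻¹ * h⁻¹ ∈ commutator G := by
    intro g h
    exact Subgroup.commutator_mem_commutator (Subgroup.mem_top g) (Subgroup.mem_top h)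
  have hcentral : ∀ g h k : G, g * h * g⁻¹ * h⁻¹ * k = k * (g * h * g⁻¹ * h⁻¹) := by
    intro g h k
    exact (Subgroup.mem_center_iff.1 (h2step (hcomG2 g h)) k).symm
  -- `G2` is central
  have hG2c : ∀ g ∈ G2, ∀ h, g * h = h * g := by
    intro g hg h
    obtain ⟨n, hn, hgn⟩ := (hG2 g).1 hg
    have hcen := Subgroup.mem_center_iff.1 (h2step hgn) h
    set c := g * h * g⁻¹ * h⁻¹ with hc
    have hcc : ∀ k, c * k = k * c := fun k => hcentral g h k
    have hconj : h * g * h⁻¹ = c⁻¹ * g := by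
      rw [hc]; group
    have hpow : (h * g * h⁻¹) ^ n = (c⁻¹) ^ n * g ^ n := by
      rw [hconj]
      exact (show Commute c⁻¹ g from (show Commute c g from hcc g).inv_left).mul_pow n
    rw [conj_pow, hcen, mul_inv_cancel_right] at hpow
    have h1 : (c⁻¹) ^ n = 1 := by
      have := hpow.symm
      simpa using this
    have h2 := htf _ n hn h1
    rw [inv_eq_one] at h2
    have : g * h = c * (h * g) := by rw [hc]; group
    rw [this, h2, one_mul]
  obtain ⟨z0, hz0⟩ := IsCyclic.exists_generator (α := G2)
  set z : G := (z0 : G) with hzdef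
  have hzpow : ∀ g, g ∈ G2 ↔ ∃ k : ℤ, z ^ k = g := by
    intro g
    constructor
    · intro hg
      obtain ⟨k, hk⟩ := Subgroup.mem_zpowers_iff.1 (hz0 ⟨g, hg⟩)
      exact ⟨k, by have := congrArg Subtype.val hk; simpa using this⟩
    · rintro ⟨k, rfl⟩
      exact G2.zpow_mem z0.2 k
  have hzne : z ≠ 1 := by
    intro h
    have : Subsingleton G2 := ⟨fun a b => by
      obtain ⟨k, hk⟩ := (hzpow a).1 a.2
      obtain ⟨l, hl⟩ := (hzpow b).1 b.2
      apply Subtype.ext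
      rw [← hk, ← hl, h]; simp⟩
    exact not_finite G2
  have hz : ∀ k : ℤ, z ^ k = 1 → k = 0 := by
    intro k hk
    by_contra hk0
    apply hzne
    apply htf z k.natAbs (by omega)
    rcases Int.natAbs_eq k with h | h
    · rw [h, zpow_natCast] at hk; exact hk
    · rw [h, zpow_neg, zpow_natCast, inv_eq_one] at hk; exact hk
  have hnc : ∃ g h : G, g * h ≠ h * g := by
    by_contra! hcon
    have hbot : commutator G = ⊥ := by
      rw [commutator_def, Subgroup.commutator_eq_bot_iff_le_centralizer]
      intro g _
      rw [Subgroup.mem_centralizer_iff]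
      intro h _
      exact hcon _ _
    obtain ⟨n, hn, hzn⟩ := (hG2 z).1 z0.2
    rw [hbot, Subgroup.mem_bot] at hzn
    exact hzne (htf z n hn hzn)
  letI : CommGroup (G ⧸ G2) :=
    { (inferInstance : Group (G ⧸ G2)) with
      mul_comm := by
        rintro ⟨a⟩ ⟨b⟩
        change ((a * b : G) : G ⧸ G2) = ((b * a : G) : G ⧸ G2)
        rw [QuotientGroup.eq]
        refine (hG2 _).2 ⟨1, one_pos, ?_⟩
        have := hcomG2 b⁻¹ a⁻¹
        rw [pow_one]
        convert this using 1
        group }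
  haveI : Module.Finite ℤ (Additive (G ⧸ G2)) := by
    rw [Module.Finite.iff_addGroup_fg]
    haveI := hfg
    exact GroupFG.iff_add_fg.1 (QuotientGroup.fg G2)
  haveI : Module.IsTorsionFree ℤ (Additive (G ⧸ G2)) := by
    refine Module.IsTorsionFree.of_smul_eq_zero fun r m h => ?_
    by_cases hr : r = 0
    · exact Or.inl hr
    · right
      obtain ⟨g, hg⟩ := QuotientGroup.mk_surjective (Additive.toMul m)
      have hm : m = Additive.ofMul (g : G ⧸ G2) := by rw [hg]; rfl
      subst hm
      have h1 : ((g ^ r : G) : G ⧸ G2) = 1 := h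
      have h2 : g ^ r ∈ G2 := (QuotientGroup.eq_one_iff _).1 h1
      have h3 : g ^ r.natAbs ∈ G2 := by
        rcases Int.natAbs_eq r with h | h
        · rw [h, zpow_natCast] at h2; exact h2
        · rw [h, zpow_neg, zpow_natCast] at h2; exact (Subgroup.inv_mem_iff G2).1 h2
      obtain ⟨n, hn, hgn⟩ := (hG2 _).1 h3
      rw [← pow_mul] at hgn
      have h4 : g ∈ G2 := (hG2 g).2 ⟨_, Nat.mul_pos (by omega) hn, hgn⟩
      exact (QuotientGroup.eq_one_iff g).2 h4
  haveI : Module.Free ℤ (Additive (G ⧸ G2)) := Module.free_of_finite_type_torsion_free'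
  obtain ⟨D⟩ := exists_hdata (G := G) (V := Additive (G ⧸ G2))
    (fun g => Additive.ofMul (g : G ⧸ G2)) (fun g h => rfl)
    (fun x => by
      obtain ⟨g, hg⟩ := QuotientGroup.mk_surjective (Additive.toMul x)
      exact ⟨g, by simp [hg]⟩) z
    (fun g => hG2c z z0.2 g)
    (fun g => by
      rw [← hzpow]
      exact QuotientGroup.eq_one_iff g) hz hnc
  exact ⟨D.ψ, fun S hS => D.transcendental (Module.finBasis ℤ (Additive (G ⧸ G2))) S hS⟩
end

section
/- Let M be a finitely generated free ℤ-module with finite generating set S, let ψ be an automorphism of M, let I be the image of ψ − id, and let (I, J, 𝔄)_M be a transversality triple. Then there exist constants C₁, C₂ > 0 (depending only on S, ψ and the triple) such that every v ∈ M can be written as v = (ψ(w) − w) + j + a for some w ∈ M, j ∈ J and a ∈ 𝔄 with ‖w‖_S ≤ C₁‖v‖_S and ‖j‖_S ≤ C₂‖v‖_S. -/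
/-- Word norm on an additive group with respect to a finite generating set
(negatives of generators allowed). -/
noncomputable def addWordNorm {M : Type*} [AddCommGroup M] (S : Finset M) (v : M) : ℕ :=
  sInf {n | ∃ l : List M, l.length = n ∧ (∀ x ∈ l, x ∈ S ∨ -x ∈ S) ∧ l.sum = v}

theorem awn_exists {M : Type*} [AddCommGroup M] (S : Finset M)
    (hS : AddSubgroup.closure (S : Set M) = ⊤) (v : M) :
    ∃ l : List M, l.length = addWordNorm S v ∧ (∀ x ∈ l, x ∈ S ∨ -x ∈ S) ∧ l.sum = v := by
  have hne : {n | ∃ l : List M, l.length = n ∧ (∀ x ∈ l, x ∈ S ∨ -x ∈ S) ∧ l.sum = v}.Nonempty := by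
    have hv : v ∈ AddSubgroup.closure (S : Set M) := by rw [hS]; trivial
    rw [← AddSubgroup.mem_toAddSubmonoid, AddSubgroup.closure_toAddSubmonoid] at hv
    obtain ⟨l, hl, hs⟩ := AddSubmonoid.exists_list_of_mem_closure hv
    exact ⟨l.length, l, rfl, fun x hx => by simpa using hl x hx, hs⟩
  exact Nat.sInf_mem hne

theorem awn_add_le {M : Type*} [AddCommGroup M] (S : Finset M)
    (hS : AddSubgroup.closure (S : Set M) = ⊤) (x y : M) :
    addWordNorm S (x + y) ≤ addWordNorm S x + addWordNorm S y := by
  obtain ⟨l, hl, hl1, hl2⟩ := awn_exists S hS x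
  obtain ⟨m, hm, hm1, hm2⟩ := awn_exists S hS y
  refine Nat.sInf_le ⟨l ++ m, by simp [hl, hm], ?_, by simp [hl2, hm2]⟩
  intro z hz
  rcases List.mem_append.1 hz with h | h
  · exact hl1 z h
  · exact hm1 z h

theorem awn_zero {M : Type*} [AddCommGroup M] (S : Finset M) :
    addWordNorm S (0 : M) = 0 :=
  Nat.le_zero.1 (Nat.sInf_le ⟨[], by simp⟩)

/-- Decomposition `v = (ψ w - w) + j + a` with linear control of the norms of `w` and `j`,
for a transversality triple `(I, J, 𝔄)` with `I` the image of `ψ - id`. -/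
theorem transversal_decomposition
    (M : Type*) [AddCommGroup M] [Module ℤ M] [Module.Free ℤ M] [Module.Finite ℤ M]
    (S : Finset M) (hS : AddSubgroup.closure (S : Set M) = ⊤)
    (ψ : M ≃+ M)
    (J : AddSubgroup M) (𝔄 : Finset M) (h0 : (0 : M) ∈ 𝔄)
    (hIJ : (ψ.toAddMonoidHom - AddMonoidHom.id M).range ⊓ J = ⊥)
    (hindex : ((ψ.toAddMonoidHom - AddMonoidHom.id M).range ⊔ J).index ≠ 0)
    (hcover : ∀ v : M, ∃ i ∈ (ψ.toAddMonoidHom - AddMonoidHom.id M).range,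
      ∃ j ∈ J, ∃ a ∈ 𝔄, v = i + j + a) :
    ∃ C₁ C₂ : ℝ, 0 < C₁ ∧ 0 < C₂ ∧
      ∀ v : M, ∃ w : M, ∃ j ∈ J, ∃ a ∈ 𝔄,
        v = (ψ w - w) + j + a ∧
        (addWordNorm S w : ℝ) ≤ C₁ * addWordNorm S v ∧
        (addWordNorm S j : ℝ) ≤ C₂ * addWordNorm S v := by
  classical
  have key : ∀ v : M, ∃ w : M, ∃ j ∈ J, ∃ a ∈ 𝔄, v = (ψ w - w) + j + a := by
    intro v
    obtain ⟨i, ⟨w, hw⟩, j, hj, a, ha, h⟩ := hcover v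
    refine ⟨w, j, hj, a, ha, ?_⟩
    rw [h, ← hw]
    rfl
  choose fw fj hfj fa hfa hf using key
  -- the finite set of sums of an element of `𝔄` and a signed generator
  let T : Finset M := (𝔄 ×ˢ (S ∪ S.image (fun x => -x))).image (fun p => p.1 + p.2)
  let C : ℕ := ∑ x ∈ T, (addWordNorm S (fw x) + addWordNorm S (fj x)) + 1
  have hC : ∀ x ∈ T, addWordNorm S (fw x) + addWordNorm S (fj x) ≤ C := by
    intro x hx
    have := Finset.single_le_sum
      (f := fun x => addWordNorm S (fw x) + addWordNorm S (fj x)) (fun _ _ => Nat.zero_le _) hx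
    exact le_trans this (Nat.le_succ _)
  have main : ∀ l : List M, (∀ x ∈ l, x ∈ S ∨ -x ∈ S) → ∃ w : M, ∃ j ∈ J, ∃ a ∈ 𝔄,
      l.sum = (ψ w - w) + j + a ∧ addWordNorm S w ≤ C * l.length ∧
        addWordNorm S j ≤ C * l.length := by
    intro l
    induction l with
    | nil =>
      intro _
      exact ⟨0, 0, J.zero_mem, 0, h0, by simp, by simp [awn_zero], by simp [awn_zero]⟩
    | cons s l ih =>
      intro hl
      obtain ⟨w, j, hj, a, ha, h, h1, h2⟩ := ih (fun x hx => hl x (List.mem_cons_of_mem _ hx))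
      have hsT : a + s ∈ T := by
        refine Finset.mem_image.2 ⟨(a, s), Finset.mem_product.2 ⟨ha, ?_⟩, rfl⟩
        rcases hl s List.mem_cons_self with h | h
        · exact Finset.mem_union_left _ h
        · exact Finset.mem_union_right _ (Finset.mem_image.2 ⟨-s, h, neg_neg s⟩)
      have hb := hC _ hsT
      refine ⟨w + fw (a + s), j + fj (a + s), J.add_mem hj (hfj _), fa (a + s), hfa _, ?_, ?_, ?_⟩
      · have e : s + l.sum = (ψ w - w) + j + (a + s) := by rw [h]; abel
        rw [List.sum_cons, e, map_add]
        nth_rewrite 1 [hf (a + s)]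
        abel
      · have := awn_add_le S hS w (fw (a + s))
        rw [List.length_cons, Nat.mul_succ]
        omega
      · have := awn_add_le S hS j (fj (a + s))
        rw [List.length_cons, Nat.mul_succ]
        omega
  have hCpos : (0 : ℝ) < C := by exact_mod_cast Nat.succ_pos _
  refine ⟨C, C, hCpos, hCpos, fun v => ?_⟩
  obtain ⟨l, hl, hl1, hl2⟩ := awn_exists S hS v
  obtain ⟨w, j, hj, a, ha, h, h1, h2⟩ := main l hl1
  rw [hl] at h1 h2
  exact ⟨w, j, hj, a, ha, hl2 ▸ h, by exact_mod_cast h1, by exact_mod_cast h2⟩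
end

section
/- Let A be a finitely generated free ℤ-module, ω : A × A → ℤ an alternating bilinear form, and H_ω the associated group on A × ℤ. Let ψ_c be an automorphism of A preserving ω (ω(ψ_c a, ψ_c a') = ω(a, a') for all a, a') and ψ' : A → ℤ a linear map, and let ψ be the automorphism of H_ω given by ψ(a, c) = (ψ_c(a), c + ψ'(a)). Then two elements (a, b) and (a, b') of H_ω are ψ-conjugate if and only if there exists v ∈ A with ψ_c(v) = v and 2ω(v, a) − ψ'(v) = b' − b. -/
variable {A : Type*} [AddCommGroup A]

/-- The group `H_ω` on `A × ℤ`, with multiplication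
`(a, c) * (a', c') = (a + a', c + c' + ω a a')`. -/
def heisGroup (ω : A →ₗ[ℤ] A →ₗ[ℤ] ℤ) : Group (A × ℤ) where
  mul x y := (x.1 + y.1, x.2 + y.2 + ω x.1 y.1)
  one := (0, 0)
  inv x := (-x.1, -x.2 + ω x.1 x.1)
  mul_assoc x y z := by
    show (Prod.mk _ _ : A × ℤ) = Prod.mk _ _
    refine Prod.ext ?_ ?_
    · show x.1 + y.1 + z.1 = x.1 + (y.1 + z.1); exact add_assoc _ _ _
    · show x.2 + y.2 + ω x.1 y.1 + z.2 + ω (x.1 + y.1) z.1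
        = x.2 + (y.2 + z.2 + ω y.1 z.1) + ω x.1 (y.1 + z.1)
      simp only [map_add, LinearMap.add_apply]
      ring
  one_mul x := by
    show (Prod.mk _ _ : A × ℤ) = x
    refine Prod.ext ?_ ?_
    · show (0 : A) + x.1 = x.1; exact zero_add _
    · show (0 : ℤ) + x.2 + ω 0 x.1 = x.2
      simp
  mul_one x := by
    show (Prod.mk _ _ : A × ℤ) = x
    refine Prod.ext ?_ ?_
    · show x.1 + (0 : A) = x.1; exact add_zero _
    · show x.2 + (0 : ℤ) + ω x.1 0 = x.2
      simp
  inv_mul_cancel x := by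
    show (Prod.mk _ _ : A × ℤ) = Prod.mk _ _
    refine Prod.ext ?_ ?_
    · show -x.1 + x.1 = (0 : A); exact neg_add_cancel _
    · show -x.2 + ω x.1 x.1 + x.2 + ω (-x.1) x.1 = (0 : ℤ)
      simp only [map_neg, LinearMap.neg_apply]
      ring

/-- Twisted conjugacy with respect to an arbitrary self-map `ψ`:
`x ∼_ψ y` iff `g * x * (ψ g)⁻¹ = y` for some `g`. -/
def TwistedConjFun {G : Type*} [Group G] (ψ : G → G) (x y : G) : Prop :=
  ∃ g : G, g * x * (ψ g)⁻¹ = y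

/-- Characterisation of twisted conjugacy of elements of `H_ω` with the same first
coordinate, for the automorphism `ψ(a, c) = (ψ_c a, c + ψ' a)`. -/
theorem heis_twistedConj_iff
    (A : Type*) [AddCommGroup A] [Module.Free ℤ A] [Module.Finite ℤ A]
    (ω : A →ₗ[ℤ] A →ₗ[ℤ] ℤ) (halt : ∀ a : A, ω a a = 0)
    (ψc : A ≃ₗ[ℤ] A) (hpres : ∀ a a' : A, ω (ψc a) (ψc a') = ω a a')
    (ψ' : A →ₗ[ℤ] ℤ) (a : A) (b b' : ℤ) :
    letI : Group (A × ℤ) := heisGroup ω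
    (TwistedConjFun (fun p : A × ℤ => (ψc p.1, p.2 + ψ' p.1)) (a, b) (a, b') ↔
      ∃ v : A, ψc v = v ∧ 2 * ω v a - ψ' v = b' - b) := by
  have hskew : ∀ x y : A, ω y x = -ω x y := by
    intro x y
    have h := halt (x + y)
    simp only [map_add, LinearMap.add_apply, halt] at h
    linarith
  have key : ∀ (v : A) (c : ℤ),
      ((v + a + -ψc v,
        c + b + ω v a + (-(c + ψ' v) + ω (ψc v) (ψc v)) + ω (v + a) (-ψc v)) : A × ℤ) = (a, b') ↔
      (ψc v = v ∧ 2 * ω v a - ψ' v = b' - b) := by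
    intro v c
    rw [Prod.mk.injEq]
    have h1 : v + a + -ψc v = a ↔ ψc v = v := by
      constructor
      · intro h
        have h2 : v - ψc v = 0 := by
          calc v - ψc v = (v + a + -ψc v) - a := by abel
            _ = 0 := by rw [h, sub_self]
        exact (sub_eq_zero.mp h2).symm
      · intro h
        rw [h]
        abel
    rw [h1]
    refine and_congr_right fun h => ?_
    rw [h]
    simp only [map_add, map_neg, LinearMap.add_apply, halt, hskew v a]
    constructor <;> intro h <;> linarith
  constructor
  · rintro ⟨⟨v, c⟩, h⟩
    exact ⟨v, (key v c).mp h⟩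
  · rintro ⟨v, hv⟩
    exact ⟨(v, 0), (key v 0).mpr hv⟩
end

section
/- Let M be a finitely generated free ℤ-module, ω : M × M → ℤ a non-degenerate alternating bilinear form, and ψ_z an automorphism of M preserving ω (ω(ψ_z a, ψ_z b) = ω(a, b) for all a, b). Let I be the image of ψ_z − id, let J ≤ M be transversal to I, and let K be the kernel of ψ_z − id. Then the map K → Hom_ℤ(J, ℤ) sending k to the restriction ω(k, ·)|_J is an injective ℤ-linear map. -/
/-- The linear map sending `k ∈ K` to the restriction of `ω k` to `J`. -/
def omegaToDual {M : Type*} [AddCommGroup M] [Module ℤ M]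
    (ω : M →ₗ[ℤ] M →ₗ[ℤ] ℤ) (K J : Submodule ℤ M) :
    K →ₗ[ℤ] (J →ₗ[ℤ] ℤ) where
  toFun k := (ω (k : M)).domRestrict J
  map_add' k k' := by ext j; simp
  map_smul' c k := by ext j; simp

/-- For a non-degenerate alternating form `ω` preserved by `ψ_z`, the map
`K → Hom(J, ℤ)`, `k ↦ ω(k, ·)|_J`, is injective, where `K = ker (ψ_z - id)` and
`J` is transversal to `I = range (ψ_z - id)`. -/
theorem kernel_injects_into_dual
    (M : Type*) [AddCommGroup M] [Module ℤ M] [Module.Free ℤ M] [Module.Finite ℤ M]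
    (ω : M →ₗ[ℤ] M →ₗ[ℤ] ℤ)
    (halt : ∀ a : M, ω a a = 0)
    (hnondeg : ∀ m : M, (∀ m' : M, ω m m' = 0) → m = 0)
    (ψz : M ≃ₗ[ℤ] M) (hpres : ∀ a b : M, ω (ψz a) (ψz b) = ω a b)
    (J : Submodule ℤ M)
    (hIJ : LinearMap.range (ψz.toLinearMap - LinearMap.id) ⊓ J = ⊥)
    (hindex : (LinearMap.range (ψz.toLinearMap - LinearMap.id) ⊔ J).toAddSubgroup.index ≠ 0) :
    Function.Injective
      (omegaToDual ω (LinearMap.ker (ψz.toLinearMap - LinearMap.id)) J) := by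
  rw [injective_iff_map_eq_zero]
  rintro ⟨k, hk⟩ h
  have hk' : ψz k = k := by
    simpa [LinearMap.mem_ker, sub_eq_zero] using hk
  have hJ : ∀ j ∈ J, ω k j = 0 := fun j hj => by
    have := LinearMap.congr_fun h ⟨j, hj⟩
    simpa [omegaToDual] using this
  have hS : ∀ x ∈ LinearMap.range (ψz.toLinearMap - LinearMap.id) ⊔ J, ω k x = 0 := by
    intro x hx
    obtain ⟨y, ⟨m, rfl⟩, j, hj, rfl⟩ := Submodule.mem_sup.1 hx
    have h1 := hpres k m
    rw [hk'] at h1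
    simp [hJ j hj, h1]
  apply Subtype.ext
  apply hnondeg
  intro m
  have h2 := hS _ (AddSubgroup.nsmul_index_mem
    (LinearMap.range (ψz.toLinearMap - LinearMap.id) ⊔ J).toAddSubgroup m)
  rw [map_nsmul] at h2
  exact (smul_eq_zero.1 h2).resolve_left hindex
end

section
/- Let M be a finitely generated free ℤ-module, ω : M × M → ℤ an alternating bilinear form with radical R = {m ∈ M : ω(m, ·) = 0}, ψ_c an automorphism of M preserving ω, and ψ' : M → ℤ a linear map vanishing on ker(ψ_c − id) ∩ R. Let I be the image of ψ_c − id, let J ≤ M be transversal to I, and let K = ker(ψ_c − id). Assume ω induces a non-degenerate form on M/R. Then the set {j ↦ 2ω(k, j) − ψ'(k) : k ∈ K} is a submodule of the module of affine maps J → ℤ of rank equal to rank(K) − rank(K ∩ R), and the only constant function it contains is the zero function. -/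
/-- The rank of an abelian group does not depend on the chosen `ℤ`-module structure. -/
theorem finrank_int_inst (N : Type*) [AddCommGroup N] (i j : Module ℤ N) :
    @Module.finrank ℤ N _ _ i = @Module.finrank ℤ N _ _ j := by
  rw [Subsingleton.elim i j]

/-- Rank-nullity for the restriction of a linear map to a submodule. -/
theorem finrank_map_add_finrank_inf_ker {A M N : Type*} [CommRing A] [IsDomain A]
    [AddCommGroup M] [Module A M] [IsNoetherian A M] [AddCommGroup N] [Module A N]
    (K : Submodule A M) (L : M →ₗ[A] N) :
    Module.finrank A ↥(K.map L) + Module.finrank A ↥(K ⊓ LinearMap.ker L) =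
      Module.finrank A ↥K := by
  have hrn := Submodule.finrank_quotient_add_finrank (LinearMap.ker (L.comp K.subtype))
  rw [(L.comp K.subtype).quotKerEquivRange.finrank_eq] at hrn
  have hker : LinearMap.ker (L.comp K.subtype) = (K ⊓ LinearMap.ker L).comap K.subtype := by
    ext ⟨k, hk⟩
    simp
  have he := (Submodule.comapSubtypeEquivOfLe
    (inf_le_left : K ⊓ LinearMap.ker L ≤ K)).finrank_eq
  rw [hker, LinearMap.range_comp, Submodule.range_subtype, he] at hrn
  exact hrn

/-- The maps `j ↦ 2 ω(k, j) − ψ'(k)`, for `k` in the kernel of `ψ_c − id`, form a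
submodule of the affine maps `J → ℤ` of rank `rank K − rank (K ⊓ R)`, containing no
nonzero constant function. -/
theorem kernel_affine_maps_rank
    (M : Type*) [AddCommGroup M] [Module ℤ M] [Module.Free ℤ M] [Module.Finite ℤ M]
    (ω : M →ₗ[ℤ] M →ₗ[ℤ] ℤ)
    (halt : ∀ a : M, ω a a = 0)
    (ψc : M ≃ₗ[ℤ] M) (hpres : ∀ a b : M, ω (ψc a) (ψc b) = ω a b)
    (ψ' : M →ₗ[ℤ] ℤ)
    (R : Submodule ℤ M) (hR : ∀ m : M, m ∈ R ↔ ∀ m' : M, ω m m' = 0)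
    (hψ' : ∀ k ∈ LinearMap.ker (ψc.toLinearMap - LinearMap.id) ⊓ R, ψ' k = 0)
    (J : Submodule ℤ M)
    (hIJ : LinearMap.range (ψc.toLinearMap - LinearMap.id) ⊓ J = ⊥)
    (hindex : (LinearMap.range (ψc.toLinearMap - LinearMap.id) ⊔ J).toAddSubgroup.index ≠ 0) :
    ∃ T : Submodule ℤ (↥J → ℤ),
      (T : Set (↥J → ℤ)) =
        {f | ∃ k ∈ LinearMap.ker (ψc.toLinearMap - LinearMap.id),
          f = fun j : ↥J => 2 * ω k j - ψ' k} ∧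
      (∀ f ∈ T, ∃ (φ : ↥J →ₗ[ℤ] ℤ) (c : ℤ), f = fun j => φ j + c) ∧
      Module.finrank ℤ ↥T =
        Module.finrank ℤ ↥(LinearMap.ker (ψc.toLinearMap - LinearMap.id)) -
          Module.finrank ℤ ↥(LinearMap.ker (ψc.toLinearMap - LinearMap.id) ⊓ R) ∧
      (∀ f ∈ T, (∃ c : ℤ, f = fun _ => c) → f = 0) := by
  classical
  set K := LinearMap.ker (ψc.toLinearMap - LinearMap.id) with hK
  -- `k ∈ K` orthogonal to `J` lies in the radical
  have key : ∀ k ∈ K, (∀ j ∈ J, ω k j = 0) → k ∈ R := by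
    intro k hk hj
    have hk' : ψc k = k := by
      have h := LinearMap.mem_ker.mp hk
      simpa [sub_eq_zero] using h
    have hle : LinearMap.range (ψc.toLinearMap - LinearMap.id) ⊔ J ≤ LinearMap.ker (ω k) := by
      refine sup_le ?_ ?_
      · rintro _ ⟨m, rfl⟩
        have h := hpres k m
        rw [hk'] at h
        simp [h]
      · intro j hjJ
        exact hj j hjJ
    rw [hR]
    intro m
    have hm := AddSubgroup.nsmul_index_mem
      (LinearMap.range (ψc.toLinearMap - LinearMap.id) ⊔ J).toAddSubgroup m
    have h0 := LinearMap.mem_ker.mp (hle hm)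
    rw [map_nsmul, smul_eq_zero] at h0
    exact h0.resolve_left hindex
  let L : M →ₗ[ℤ] (↥J → ℤ) :=
    LinearMap.pi fun j => (2 : ℤ) • (ω.flip (j : M)) - ψ'
  have hL : ∀ k, L k = fun j : ↥J => 2 * ω k j - ψ' k := by
    intro k
    ext j
    simp [L]
  have hconst : ∀ k ∈ K, ∀ c : ℤ, (L k = fun _ => c) → k ∈ R := by
    intro k hk c h
    rw [hL] at h
    refine key k hk fun j hj => ?_
    have h1 := congrFun h ⟨j, hj⟩
    have h2 := congrFun h 0
    simp at h1 h2
    omega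
  have hzero : ∀ k ∈ K, k ∈ R → L k = 0 := by
    intro k hk hkR
    rw [hL]
    ext j
    simp [(hR k).mp hkR, hψ' k ⟨hk, hkR⟩]
  refine ⟨K.map L, ?_, ?_, ?_, ?_⟩
  · ext f
    constructor
    · rintro ⟨k, hk, rfl⟩
      exact ⟨k, hk, hL k⟩
    · rintro ⟨k, hk, rfl⟩
      exact ⟨k, hk, hL k⟩
  · rintro _ ⟨k, hk, rfl⟩
    refine ⟨(2 : ℤ) • ((ω k).comp J.subtype), -ψ' k, ?_⟩
    rw [hL]
    ext j
    simp [sub_eq_add_neg]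
  · have hker : K ⊓ R = K ⊓ LinearMap.ker L := by
      ext k
      constructor
      · intro h
        exact ⟨h.1, LinearMap.mem_ker.mpr (hzero k h.1 h.2)⟩
      · intro h
        exact ⟨h.1, hconst k h.1 0 (LinearMap.mem_ker.mp h.2)⟩
    have : IsNoetherian ℤ M := isNoetherian_of_isNoetherianRing_of_finite ℤ M
    have hrn := finrank_map_add_finrank_inf_ker K L
    rw [hker]
    have e := Nat.eq_sub_of_add_eq hrn
    refine (finrank_int_inst _ _ _).trans (e.trans ?_)
    exact congrArg₂ (fun a b : ℕ => a - b) (finrank_int_inst _ _ _) (finrank_int_inst _ _ _)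
  · rintro _ ⟨k, hk, rfl⟩ ⟨c, hc⟩
    exact hzero k hk (hconst k hk c hc)
end

section
/- Let 0 < 𝔡 ≤ l be integers and for i = 1, …, 𝔡 let θ_i : ℤ → ℤ, x ↦ a_i x + b_i be affine maps with a_i ≠ 0. Then, as a function of N, Σ_{λ₁=−N}^{N} Σ_{λ₂=−N}^{N} ⋯ Σ_{λ_l=−N}^{N} gcd(θ₁(λ₁), θ₂(λ₂), …, θ_𝔡(λ_𝔡)) ≃ N^l · d_𝔡(N), where d_𝔡(N) = N if 𝔡 = 1, d_𝔡(N) = ln(N) if 𝔡 = 2, and d_𝔡(N) = 1 if 𝔡 ≥ 3. -/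
noncomputable def gam {d : ℕ} (a b : Fin d → ℤ) (s : Fin d → ℤ) : ℤ :=
  Finset.univ.gcd fun i => a i * s i + b i

noncomputable def box (d n : ℕ) : Finset (Fin d → ℤ) :=
  Fintype.piFinset (fun _ : Fin d => Finset.Icc (-(n : ℤ)) (n : ℤ))

lemma mem_box {d n : ℕ} {s : Fin d → ℤ} : s ∈ box d n ↔ ∀ i, |s i| ≤ n := by
  simp [box, Fintype.mem_piFinset, abs_le]

lemma card_box (d n : ℕ) : (box d n).card = (2 * n + 1) ^ d := by
  simp only [box, Fintype.card_piFinset, Int.card_Icc, Finset.prod_const, Finset.card_univ,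
    Fintype.card_fin]
  congr 1
  omega

lemma gam_nonneg {d : ℕ} (a b s : Fin d → ℤ) : 0 ≤ gam a b s := by
  have h : normalize (gam a b s) = gam a b s := Finset.normalize_gcd
  rw [← h, ← Int.abs_eq_normalize]
  exact abs_nonneg _

lemma gam_le {d : ℕ} (a b s : Fin d → ℤ) (M : ℤ) (hM : 0 ≤ M)
    (h : ∀ i, |a i * s i + b i| ≤ M) : gam a b s ≤ M := by
  by_cases h0 : ∃ i, a i * s i + b i ≠ 0
  · obtain ⟨i, hi⟩ := h0
    have hd : gam a b s ∣ a i * s i + b i := Finset.gcd_dvd (Finset.mem_univ i)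
    have := Int.le_of_dvd (abs_pos.mpr hi) ((dvd_abs _ _).mpr hd)
    exact this.trans (h i)
  · push Not at h0
    have : gam a b s = 0 := Finset.gcd_eq_zero_iff.mpr (fun i _ => h0 i)
    omega

/-- constant -/
def CC {d : ℕ} (a b : Fin d → ℤ) : ℕ := 1 + ∑ i, ((a i).natAbs + (b i).natAbs)

lemma CC_spec {d : ℕ} (a b : Fin d → ℤ) (i : Fin d) : |a i| + |b i| ≤ (CC a b : ℤ) := by
  have h : (a i).natAbs + (b i).natAbs ≤ ∑ i, ((a i).natAbs + (b i).natAbs) :=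
    Finset.single_le_sum (f := fun i => (a i).natAbs + (b i).natAbs)
      (fun _ _ => Nat.zero_le _) (Finset.mem_univ i)
  unfold CC
  rw [Int.abs_eq_natAbs, Int.abs_eq_natAbs]
  omega

lemma theta_le {d n : ℕ} (hn : 1 ≤ n) (a b s : Fin d → ℤ) (hs : s ∈ box d n) (i : Fin d) :
    |a i * s i + b i| ≤ ((CC a b * n : ℕ) : ℤ) := by
  have h1 := mem_box.mp hs i
  have h2 := CC_spec a b i
  have hn' : (1 : ℤ) ≤ n := by exact_mod_cast hn
  calc |a i * s i + b i| ≤ |a i| * |s i| + |b i| := by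
        rw [← abs_mul]; exact abs_add_le _ _
    _ ≤ |a i| * n + |b i| * n := by
        gcongr
        nlinarith [abs_nonneg (b i)]
    _ = (|a i| + |b i|) * n := by ring
    _ ≤ _ := by push_cast; gcongr

lemma count_one (a b : ℤ) (ha : a ≠ 0) (n M k : ℕ) (hk : 1 ≤ k) (hkM : k ≤ M)
    (h : ∀ x ∈ Finset.Icc (-(n : ℤ)) n, |a * x + b| ≤ M) :
    (((Finset.Icc (-(n : ℤ)) n).filter (fun x => (k : ℤ) ∣ a * x + b)).card : ℝ)
      ≤ 3 * M / k := by
  have hk0 : (0 : ℤ) < k := by exact_mod_cast hk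
  have h1 : ((Finset.Icc (-(n : ℤ)) n).filter (fun x => (k : ℤ) ∣ a * x + b)).card
      ≤ (Finset.Icc (-((M / k : ℕ) : ℤ)) ((M / k : ℕ) : ℤ)).card := by
    apply Finset.card_le_card_of_injOn (fun x => (a * x + b) / k)
    · intro x hx
      simp only [Finset.coe_filter, Set.mem_ofPred_eq] at hx
      obtain ⟨hx1, q, hq⟩ := hx
      have := h x hx1
      simp only [Finset.coe_Icc, Set.mem_Icc]
      rw [hq, Int.mul_ediv_cancel_left _ hk0.ne']
      rw [hq, abs_mul, abs_of_pos hk0] at this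
      rw [← abs_le]
      push_cast
      rw [Int.le_ediv_iff_mul_le hk0]
      linarith
    · intro x hx y hy hxy
      simp only [Finset.coe_filter, Set.mem_ofPred_eq] at hx hy
      obtain ⟨hx1, q, hq⟩ := hx
      obtain ⟨hy1, r, hr⟩ := hy
      simp only [hq, hr, Int.mul_ediv_cancel_left _ hk0.ne'] at hxy
      have : a * x = a * y := by rw [hxy] at hq; linarith
      exact mul_left_cancel₀ ha this
  rw [Int.card_Icc] at h1
  have h2 : ((Finset.Icc (-(n : ℤ)) n).filter (fun x => (k : ℤ) ∣ a * x + b)).card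
      ≤ 2 * (M / k) + 1 := by omega
  have h3 : 1 ≤ M / k := (Nat.one_le_div_iff hk).mpr hkM
  have h4 : ((M / k : ℕ) : ℝ) ≤ M / k := Nat.cast_div_le
  have h5 : (1 : ℝ) ≤ ((M / k : ℕ) : ℝ) := by exact_mod_cast h3
  have h6 : (((Finset.Icc (-(n : ℤ)) n).filter (fun x => (k : ℤ) ∣ a * x + b)).card : ℝ)
      ≤ 2 * ((M / k : ℕ) : ℝ) + 1 := by exact_mod_cast h2
  rw [mul_div_assoc]
  linarith

lemma count_dvd {d : ℕ} (a b : Fin d → ℤ) (ha : ∀ i, a i ≠ 0) (n k : ℕ) (hn : 1 ≤ n)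
    (hk : 1 ≤ k) (hkM : k ≤ CC a b * n) :
    (((box d n).filter (fun s => (k : ℤ) ∣ gam a b s)).card : ℝ)
      ≤ (3 * (CC a b * n : ℕ) / k) ^ d := by
  have h1 : (box d n).filter (fun s => (k : ℤ) ∣ gam a b s) =
      Fintype.piFinset (fun i : Fin d =>
        (Finset.Icc (-(n : ℤ)) n).filter (fun x => (k : ℤ) ∣ a i * x + b i)) := by
    ext s
    simp only [box, gam, Finset.mem_filter, Fintype.mem_piFinset, Finset.dvd_gcd_iff,
      Finset.mem_univ, true_imp_iff]
    exact forall_and.symm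
  rw [h1, Fintype.card_piFinset]
  push_cast
  calc _ ≤ ∏ _i : Fin d, ((3 * (CC a b * n : ℕ) / k : ℝ)) := by
        apply Finset.prod_le_prod
        · intros; positivity
        · intro i _
          apply count_one _ _ (ha i) _ _ _ hk hkM
          intro x hx
          have hx' : |x| ≤ n := abs_le.mpr (Finset.mem_Icc.mp hx)
          exact theta_le hn a b (fun _ => x) (mem_box.mpr fun _ => hx') i
    _ = _ := by simp [div_pow]

lemma upper_sum {d : ℕ} (a b : Fin d → ℤ) (ha : ∀ i, a i ≠ 0) (n : ℕ) (hn : 1 ≤ n) :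
    ((∑ s ∈ box d n, gam a b s : ℤ) : ℝ) ≤
      (3 * (CC a b * n : ℕ)) ^ d * ∑ k ∈ Finset.Icc 1 (CC a b * n), (k : ℝ) / (k : ℝ) ^ d := by
  set M := CC a b * n with hM
  have h1 : ∀ s ∈ box d n, (gam a b s : ℝ) ≤
      ∑ k ∈ Finset.Icc 1 M, (if (k : ℤ) ∣ gam a b s then (k : ℝ) else 0) := by
    intro s hs
    have h0 := gam_nonneg a b s
    have hle : gam a b s ≤ M := gam_le a b s M (by positivity) (theta_le hn a b s hs)
    obtain ⟨g, hg⟩ := Int.eq_ofNat_of_zero_le h0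
    rw [hg] at hle ⊢
    by_cases hg0 : g = 0
    · subst hg0
      rw [Int.cast_natCast, Nat.cast_zero]
      apply Finset.sum_nonneg
      intro k _
      split_ifs <;> positivity
    · have hmem : g ∈ Finset.Icc 1 M := Finset.mem_Icc.mpr ⟨by omega, by exact_mod_cast hle⟩
      have := Finset.single_le_sum
        (f := fun k : ℕ => (if (k : ℤ) ∣ (g : ℤ) then (k : ℝ) else 0))
        (fun k _ => by split_ifs <;> positivity) hmem
      simpa using this
  push_cast
  calc _ ≤ ∑ s ∈ box d n, ∑ k ∈ Finset.Icc 1 M,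
        (if (k : ℤ) ∣ gam a b s then (k : ℝ) else 0) := Finset.sum_le_sum h1
    _ = ∑ k ∈ Finset.Icc 1 M, (k : ℝ) *
        (((box d n).filter (fun s => (k : ℤ) ∣ gam a b s)).card : ℝ) := by
        rw [Finset.sum_comm]
        apply Finset.sum_congr rfl
        intro k _
        rw [← Finset.sum_filter, Finset.sum_const, nsmul_eq_mul, mul_comm]
    _ ≤ ∑ k ∈ Finset.Icc 1 M, (k : ℝ) * (3 * M / k) ^ d := by
        apply Finset.sum_le_sum
        intro k hk
        rw [Finset.mem_Icc] at hk
        gcongr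
        have := count_dvd a b ha n k hn hk.1 hk.2
        rwa [← hM] at this
    _ = (3 * (M : ℝ)) ^ d * ∑ k ∈ Finset.Icc 1 M, (k : ℝ) / (k : ℝ) ^ d := by
        rw [Finset.mul_sum]
        apply Finset.sum_congr rfl
        intro k _
        rw [div_pow]
        ring

lemma sum_reduce (d m : ℕ) (a b : Fin d → ℤ) (n : ℕ) (h : d ≤ d + m) :
    (∑ lam ∈ Fintype.piFinset (fun _ : Fin (d + m) => Finset.Icc (-(n : ℤ)) (n : ℤ)),
          Finset.univ.gcd fun i : Fin d => a i * lam (Fin.castLE h i) + b i : ℤ) =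
      (2 * n + 1) ^ m * ∑ s ∈ box d n, gam a b s := by
  have h1 : ∑ p ∈ box d n ×ˢ box m n, gam a b p.1 =
      (∑ lam ∈ Fintype.piFinset (fun _ : Fin (d + m) => Finset.Icc (-(n : ℤ)) (n : ℤ)),
          Finset.univ.gcd fun i : Fin d => a i * lam (Fin.castLE h i) + b i : ℤ) := by
    apply Finset.sum_equiv (Fin.appendEquiv d m)
    · intro p
      simp only [Finset.mem_product, box, Fintype.mem_piFinset]
      constructor
      · rintro ⟨h1, h2⟩ i
        refine Fin.addCases (fun i => ?_) (fun i => ?_) i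
        · simpa [Fin.appendEquiv] using h1 i
        · simpa [Fin.appendEquiv] using h2 i
      · intro h
        exact ⟨fun i => by simpa [Fin.appendEquiv] using h (Fin.castAdd m i),
          fun i => by simpa [Fin.appendEquiv] using h (Fin.natAdd d i)⟩
    · intro p _
      unfold gam
      congr 1
      funext i
      have : Fin.castLE h i = Fin.castAdd m i := rfl
      rw [this]
      simp [Fin.appendEquiv]
  rw [← h1, Finset.sum_product]
  simp only [Finset.sum_const, card_box, nsmul_eq_mul]
  rw [← Finset.mul_sum]
  push_cast
  rfl

lemma sum_inv_sq_Ioc (G M : ℕ) (hG : G ≠ 0) :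
    ∑ k ∈ Finset.Ioc G M, ((k : ℝ) ^ 2)⁻¹ ≤ (G : ℝ)⁻¹ := by
  by_cases h : G ≤ M
  · have := sum_Ioc_inv_sq_le_sub (α := ℝ) hG h
    have h2 : (0 : ℝ) ≤ (M : ℝ)⁻¹ := by positivity
    linarith
  · rw [Finset.Ioc_eq_empty (by omega)]
    simp

lemma weight_bound (d C c n : ℕ) (hd : 0 < d) (hC : 1 ≤ C) (hc3 : 3 ≤ c) (hcC : C ≤ c)
    (hn : 1 ≤ n) :
    ∑ k ∈ Finset.Icc 1 (C * n), (k : ℝ) / (k : ℝ) ^ d ≤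
      2 * C * (if d = 1 then ((c * n : ℕ) : ℝ) else if d = 2 then Real.log (c * n : ℕ) else 1) := by
  have hC' : (1 : ℝ) ≤ C := by exact_mod_cast hC
  have hn' : (1 : ℝ) ≤ n := by exact_mod_cast hn
  have hc' : (3 : ℝ) ≤ c := by exact_mod_cast hc3
  have hcC' : (C : ℝ) ≤ c := by exact_mod_cast hcC
  split_ifs with h1 h2
  · subst h1
    have : ∑ k ∈ Finset.Icc 1 (C * n), (k : ℝ) / (k : ℝ) ^ 1 ≤
        ∑ k ∈ Finset.Icc 1 (C * n), (1 : ℝ) := by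
      apply Finset.sum_le_sum
      intro k _
      rw [pow_one]
      exact div_self_le_one _
    refine this.trans ?_
    simp only [Finset.sum_const, Nat.card_Icc, nsmul_eq_mul, mul_one, Nat.add_sub_cancel]
    push_cast
    have h3 : (n : ℝ) ≤ c * n := by nlinarith
    calc (C : ℝ) * n ≤ C * (c * n) := by gcongr
      _ ≤ 2 * C * (c * n) := by nlinarith [show (0 : ℝ) ≤ C * (c * n) by positivity]
  · subst h2
    have h3 : ∑ k ∈ Finset.Icc 1 (C * n), (k : ℝ) / (k : ℝ) ^ 2 = (harmonic (C * n) : ℝ) := by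
      rw [harmonic_eq_sum_Icc]
      push_cast
      apply Finset.sum_congr rfl
      intro k hk
      have : (k : ℝ) ≠ 0 := by
        have := (Finset.mem_Icc.mp hk).1
        positivity
      field_simp
    rw [h3]
    have h4 := harmonic_le_one_add_log (C * n)
    have h5 : (1 : ℝ) ≤ Real.log (c * n : ℕ) := by
      rw [Real.le_log_iff_exp_le (by push_cast; positivity)]
      push_cast
      have := Real.exp_one_lt_d9
      nlinarith
    have h6 : Real.log (C * n : ℕ) ≤ Real.log (c * n : ℕ) := by
      apply Real.log_le_log
      · push_cast; positivity
      · push_cast; gcongr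
    nlinarith
  · have hd3 : 3 ≤ d := by omega
    have h3 : ∑ k ∈ Finset.Icc 1 (C * n), (k : ℝ) / (k : ℝ) ^ d ≤
        ∑ k ∈ Finset.Icc 1 (C * n), ((k : ℝ) ^ 2)⁻¹ := by
      apply Finset.sum_le_sum
      intro k hk
      have hk1 : (1 : ℝ) ≤ k := by exact_mod_cast (Finset.mem_Icc.mp hk).1
      have : (k : ℝ) ^ 3 ≤ (k : ℝ) ^ d := pow_le_pow_right₀ hk1 hd3
      rw [div_le_iff₀ (by positivity)]
      calc (k : ℝ) = ((k : ℝ) ^ 2)⁻¹ * (k : ℝ) ^ 3 := by field_simp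
        _ ≤ _ := by gcongr
    have h4 : ∑ k ∈ Finset.Icc 1 (C * n), ((k : ℝ) ^ 2)⁻¹ =
        1 + ∑ k ∈ Finset.Ioc 1 (C * n), ((k : ℝ) ^ 2)⁻¹ := by
      rw [← Finset.add_sum_Ioc_eq_sum_Icc (Nat.mul_pos hC hn)]
      simp
    have h5 := sum_inv_sq_Ioc 1 (C * n) one_ne_zero
    simp only [Nat.cast_one, inv_one] at h5
    linarith

/-- Many points of the box have nonzero, bounded gcd (two variables). -/
lemma good_count (a b : Fin 2 → ℤ) (ha : ∀ i, a i ≠ 0) (T : ℕ) (hT : 1 ≤ T) :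
    (T : ℝ) ^ 2 ≤ (((box 2 T).filter
      (fun s => 1 ≤ gam a b s ∧ gam a b s ≤ (9 * CC a b ^ 2 : ℕ))).card : ℝ) := by
  set G := 9 * CC a b ^ 2 with hG
  set M := CC a b * T with hM
  have hC : 1 ≤ CC a b := by unfold CC; omega
  have hGpos : 0 < G := by positivity
  set P := (box 2 T).filter (fun s => 1 ≤ gam a b s ∧ gam a b s ≤ (G : ℕ)) with hP
  set Z := (box 2 T).filter (fun s => gam a b s = 0) with hZ
  have hsub : box 2 T ⊆ (P ∪ Z) ∪ (Finset.Ioc G M).biUnion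
      (fun k => (box 2 T).filter (fun s => (k : ℤ) ∣ gam a b s)) := by
    intro s hs
    have h0 := gam_nonneg a b s
    have hle : gam a b s ≤ M := gam_le a b s M (by positivity) (theta_le hT a b s hs)
    simp only [Finset.mem_union, Finset.mem_biUnion, hP, hZ, Finset.mem_filter, hs, true_and]
    by_cases h1 : gam a b s = 0
    · exact Or.inl (Or.inr h1)
    by_cases h2 : gam a b s ≤ G
    · exact Or.inl (Or.inl ⟨by omega, h2⟩)
    · refine Or.inr ⟨(gam a b s).toNat, ?_, ?_⟩
      · rw [Finset.mem_Ioc]; omega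
      · rw [Int.toNat_of_nonneg h0]
  have hZ1 : Z.card ≤ 1 := by
    rw [Finset.card_le_one]
    intro s hs t ht
    simp only [hZ, Finset.mem_filter, gam, Finset.gcd_eq_zero_iff, Finset.mem_univ,
      true_imp_iff] at hs ht
    funext i
    have h1 := hs.2 i
    have h2 := ht.2 i
    exact mul_left_cancel₀ (ha i) (by linarith)
  have hB : ((((Finset.Ioc G M).biUnion
      (fun k => (box 2 T).filter (fun s => (k : ℤ) ∣ gam a b s))).card : ℕ) : ℝ) ≤ (T : ℝ) ^ 2 := by
    calc _ ≤ ((∑ k ∈ Finset.Ioc G M,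
          ((box 2 T).filter (fun s => (k : ℤ) ∣ gam a b s)).card : ℕ) : ℝ) := by
          exact_mod_cast Finset.card_biUnion_le
      _ = ∑ k ∈ Finset.Ioc G M,
          (((box 2 T).filter (fun s => (k : ℤ) ∣ gam a b s)).card : ℝ) := by push_cast; rfl
      _ ≤ ∑ k ∈ Finset.Ioc G M, (9 * (M : ℝ) ^ 2) * ((k : ℝ) ^ 2)⁻¹ := by
          apply Finset.sum_le_sum
          intro k hk
          rw [Finset.mem_Ioc] at hk
          refine (count_dvd a b ha T k hT (by omega) (by omega)).trans (le_of_eq ?_)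
          rw [div_pow, ← hM]
          ring
      _ ≤ (9 * (M : ℝ) ^ 2) * (G : ℝ)⁻¹ := by
          rw [← Finset.mul_sum]
          gcongr
          exact sum_inv_sq_Ioc G M hGpos.ne'
      _ = (T : ℝ) ^ 2 := by
          have : (CC a b : ℝ) ≠ 0 := by positivity
          rw [hM, hG]
          push_cast
          field_simp
  have hc := Finset.card_le_card hsub
  have hc2 := hc.trans (Finset.card_union_le _ _)
  have hc3 := Finset.card_union_le P Z
  rw [card_box] at hc2
  have hc4 : (((2 * T + 1) ^ 2 : ℕ) : ℝ) ≤ P.card + 1 + (((Finset.Ioc G M).biUnion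
      (fun k => (box 2 T).filter (fun s => (k : ℤ) ∣ gam a b s))).card : ℕ) := by
    exact_mod_cast (by omega)
  push_cast at hc4
  nlinarith [show (0 : ℝ) ≤ T by positivity]

lemma lower_two (a b : Fin 2 → ℤ) (ha : ∀ i, a i ≠ 0) (n N A B : ℕ) (hA : 1 ≤ A)
    (hdvd : ∀ i, a i ∣ A) (hB : ∀ i, |b i| ≤ B) (hN : (1 + B) * (A * n) ≤ N) :
    (n : ℝ) ^ 2 * Real.log n ≤ 4 * (9 * CC a b ^ 2 : ℕ) *
      ((∑ s ∈ box 2 N, gam a b s : ℤ) : ℝ) := by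
  set G := 9 * CC a b ^ 2 with hG
  choose e he using hdvd
  let K : ℕ → ℕ := fun j => 1 + j * A
  let T : ℕ → ℕ := fun j => A * n / K j
  let P : ℕ → Finset (Fin 2 → ℤ) := fun j => (box 2 (T j)).filter
      (fun s => 1 ≤ gam a b s ∧ gam a b s ≤ (G : ℕ))
  let X : ℕ → (Fin 2 → ℤ) → (Fin 2 → ℤ) := fun j s i => K j * s i + b i * (j * e i)
  have hKpos : ∀ j, 1 ≤ K j := fun j => by simp [K]
  have htheta : ∀ j s i, a i * X j s i + b i = K j * (a i * s i + b i) := by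
    intro j s i
    simp only [X, K]
    push_cast
    rw [he i]
    ring
  have hgam : ∀ j s, gam a b (X j s) = K j * gam a b s := by
    intro j s
    unfold gam
    simp only [htheta]
    rw [Finset.gcd_mul_left, ← Int.abs_eq_normalize, abs_of_nonneg (by positivity)]
  have hKle : ∀ j ∈ Finset.range n, K j ≤ A * n := by
    intro j hj
    rw [Finset.mem_range] at hj
    simp only [K]
    nlinarith
  have hmem : ∀ j ∈ Finset.range n, ∀ s ∈ P j, X j s ∈ box 2 N := by
    intro j hj s hs
    have hs1 := mem_box.mp (Finset.mem_filter.mp hs).1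
    rw [mem_box]
    intro i
    have h1 : K j * T j ≤ A * n := Nat.mul_div_le _ _
    have h1' : (K j : ℤ) * T j ≤ A * n := by exact_mod_cast h1
    have h2 : |e i| ≤ A := by
      have : |(A : ℤ)| = |a i| * |e i| := by rw [he i, abs_mul]
      rw [abs_of_nonneg (by positivity)] at this
      rw [this]
      have := Int.one_le_abs (ha i)
      nlinarith [abs_nonneg (e i)]
    have hj' : (j : ℤ) ≤ n := by
      have := Finset.mem_range.mp hj
      omega
    calc |X j s i| ≤ K j * |s i| + |b i| * (j * |e i|) := by
          refine (abs_add_le _ _).trans (le_of_eq ?_)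
          simp only [abs_mul, Nat.abs_cast]
      _ ≤ K j * T j + B * (n * A) := by
          have := hB i
          have := hs1 i
          gcongr
      _ ≤ A * n + B * (n * A) := by gcongr
      _ = ((1 + B) * (A * n) : ℕ) := by push_cast; ring
      _ ≤ N := by exact_mod_cast hN
  -- double counting
  have hdc : ∑ p ∈ (Finset.range n).sigma P, (K p.1 : ℤ) ≤
      ∑ q ∈ box 2 N ×ˢ Finset.Icc (1 : ℤ) G, gam a b q.1 := by
    let Φ : (Σ _ : ℕ, (Fin 2 → ℤ)) → (Fin 2 → ℤ) × ℤ := fun p => (X p.1 p.2, gam a b p.2)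
    have hinj : Set.InjOn Φ ((Finset.range n).sigma P) := by
      rintro ⟨j, s⟩ hp ⟨j', s'⟩ hp' h
      simp only [Finset.coe_sigma, Set.mem_sigma_iff, Finset.mem_coe] at hp hp'
      simp only [Φ, Prod.mk.injEq] at h
      obtain ⟨h1, h2⟩ := h
      have hg := (Finset.mem_filter.mp hp.2).2.1
      have h3 := hgam j s
      rw [h1, hgam, ← h2] at h3
      have h4 : (K j' : ℤ) = K j := mul_right_cancel₀ (by omega) h3
      have h5 : j' = j := by
        simp only [K] at h4
        push_cast at h4
        have hA' : (A : ℤ) ≠ 0 := by omega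
        have : (j' : ℤ) * A = j * A := by linarith
        exact_mod_cast mul_right_cancel₀ hA' this
      subst h5
      congr 1
      funext i
      have h6 := congrFun h1 i
      simp only [X] at h6
      have hk : (K j' : ℤ) ≠ 0 := by have := hKpos j'; omega
      exact mul_left_cancel₀ hk (by linarith)
    calc ∑ p ∈ (Finset.range n).sigma P, (K p.1 : ℤ)
        ≤ ∑ p ∈ (Finset.range n).sigma P, gam a b (Φ p).1 := by
          apply Finset.sum_le_sum
          rintro ⟨j, s⟩ hp
          rw [Finset.mem_sigma] at hp
          have hg := (Finset.mem_filter.mp hp.2).2.1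
          simp only [Φ, hgam]
          exact le_mul_of_one_le_right (by positivity) hg
      _ = ∑ q ∈ ((Finset.range n).sigma P).image Φ, gam a b q.1 := by
          rw [Finset.sum_image hinj]
      _ ≤ _ := by
          apply Finset.sum_le_sum_of_subset_of_nonneg
          · intro q hq
            obtain ⟨⟨j, s⟩, hp, rfl⟩ := Finset.mem_image.mp hq
            rw [Finset.mem_sigma] at hp
            have hg := (Finset.mem_filter.mp hp.2).2
            rw [Finset.mem_product, Finset.mem_Icc]
            exact ⟨hmem j hp.1 s hp.2, hg⟩
          · intro q _ _
            exact gam_nonneg _ _ _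
  rw [Finset.sum_sigma, Finset.sum_product] at hdc
  simp only [Finset.sum_const, Int.card_Icc, nsmul_eq_mul] at hdc
  rw [← Finset.mul_sum] at hdc
  have hdc' : ∑ j ∈ Finset.range n, ((P j).card : ℝ) * (K j : ℝ) ≤
      (G : ℝ) * ((∑ s ∈ box 2 N, gam a b s : ℤ) : ℝ) := by
    have : (((G : ℤ) + 1 - 1).toNat : ℤ) = G := by omega
    rw [this] at hdc
    exact_mod_cast hdc
  have hterm : ∀ j ∈ Finset.range n, (n : ℝ) ^ 2 / 4 * ((j + 1 : ℕ) : ℝ)⁻¹ ≤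
      ((P j).card : ℝ) * (K j : ℝ) := by
    intro j hj
    have hKj := hKle j hj
    have hK1 := hKpos j
    have hT1 : 1 ≤ T j := (Nat.one_le_div_iff (hKpos j)).mpr hKj
    have h1 := good_count a b ha (T j) hT1
    have h2 : A * n < K j * (T j + 1) := Nat.lt_mul_div_succ _ (hKpos j)
    have h3 : A * n ≤ K j * (2 * T j) := h2.le.trans (by gcongr; omega)
    have h3' : (A : ℝ) * n ≤ K j * (2 * T j) := by exact_mod_cast h3
    have hKp : (0 : ℝ) < K j := by positivity
    have hKA : (K j : ℝ) ≤ A * (j + 1) := by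
      have : K j ≤ A * (j + 1) := by simp only [K]; nlinarith
      exact_mod_cast this
    have hA' : (1 : ℝ) ≤ A := by exact_mod_cast hA
    have h4 : ((A : ℝ) * n) ^ 2 ≤ (K j * (2 * T j)) ^ 2 := by gcongr
    calc (n : ℝ) ^ 2 / 4 * ((j + 1 : ℕ) : ℝ)⁻¹
        = ((A : ℝ) * n) ^ 2 / (4 * A * (A * (j + 1))) := by
          push_cast
          field_simp
      _ ≤ ((A : ℝ) * n) ^ 2 / (4 * 1 * (K j)) := by gcongr
      _ ≤ ((K j : ℝ) * (2 * T j)) ^ 2 / (4 * 1 * (K j)) := by gcongr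
      _ = (T j : ℝ) ^ 2 * K j := by field_simp; ring
      _ ≤ _ := by gcongr
  have hsum := Finset.sum_le_sum hterm
  rw [← Finset.mul_sum] at hsum
  have hh := log_add_one_le_harmonic n
  have hh2 : (harmonic n : ℝ) = ∑ j ∈ Finset.range n, ((j + 1 : ℕ) : ℝ)⁻¹ := by
    simp [harmonic]
  rw [← hh2] at hsum
  have hlog : Real.log n ≤ harmonic n := by
    rcases Nat.eq_zero_or_pos n with h | h
    · subst h; simp
    · refine le_trans (Real.log_le_log (by positivity) ?_) hh
      push_cast
      linarith
  have : (n : ℝ) ^ 2 * Real.log n ≤ (n : ℝ) ^ 2 * harmonic n := by gcongr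
  linarith

lemma lower_one (a b : Fin 1 → ℤ) (ha : ∀ i, a i ≠ 0) (n N B : ℕ) (hn : 1 ≤ n)
    (hB : ∀ i, |b i| ≤ B) (hN : (2 + B) * n ≤ N) :
    (n : ℝ) ^ 1 * n ≤ ((∑ s ∈ box 1 N, gam a b s : ℤ) : ℝ) := by
  have key : (n : ℤ) * n ≤ ∑ s ∈ box 1 N, gam a b s := by
    have hinj : Set.InjOn (fun (j : ℕ) (_ : Fin 1) => (n + B + j : ℤ)) (Finset.range n) := by
      intro j _ j' _ h
      have := congrFun h 0
      simp only at this
      omega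
    calc (n : ℤ) * n = ∑ j ∈ Finset.range n, (n : ℤ) := by simp
      _ ≤ ∑ j ∈ Finset.range n, gam a b (fun _ => (n + B + j : ℤ)) := by
          apply Finset.sum_le_sum
          intro j _
          have h1 : gam a b (fun _ => (n + B + j : ℤ)) = |a 0 * (n + B + j) + b 0| := by
            simp [gam, Int.abs_eq_normalize]
          rw [h1]
          have h2 := Int.one_le_abs (ha 0)
          have h3 := hB 0
          have h4 : |a 0 * (n + B + j)| = |a 0| * (n + B + j) := by
            rw [abs_mul, abs_of_nonneg (a := (n + B + j : ℤ)) (by positivity)]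
          have h5 := abs_sub_abs_le_abs_sub (a 0 * (n + B + j)) (-b 0)
          rw [sub_neg_eq_add, abs_neg, h4] at h5
          nlinarith [show (0 : ℤ) ≤ (n + B + j : ℤ) by positivity]
      _ = ∑ s ∈ (Finset.range n).image (fun (j : ℕ) (_ : Fin 1) => (n + B + j : ℤ)),
            gam a b s := by rw [Finset.sum_image hinj]
      _ ≤ _ := by
          apply Finset.sum_le_sum_of_subset_of_nonneg
          · intro q hq
            obtain ⟨j, hj, rfl⟩ := Finset.mem_image.mp hq
            rw [Finset.mem_range] at hj
            rw [mem_box]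
            intro _
            rw [abs_of_nonneg (by positivity)]
            have : n + B + j ≤ N := by nlinarith
            exact_mod_cast this
          · intro q _ _
            exact gam_nonneg _ _ _
  rw [pow_one]
  exact_mod_cast key

lemma lower_many (d : ℕ) (hd : 0 < d) (a b : Fin d → ℤ) (ha : ∀ i, a i ≠ 0) (n N : ℕ)
    (hN : n ≤ N) :
    (n : ℝ) ^ d * 1 ≤ ((∑ s ∈ box d N, gam a b s : ℤ) : ℝ) := by
  let Z := (box d N).filter (fun s => gam a b s = 0)
  have hZ1 : Z.card ≤ 1 := by
    rw [Finset.card_le_one]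
    intro s hs t ht
    simp only [Z, Finset.mem_filter, gam, Finset.gcd_eq_zero_iff, Finset.mem_univ,
      true_imp_iff] at hs ht
    funext i
    have h1 := hs.2 i
    have h2 := ht.2 i
    exact mul_left_cancel₀ (ha i) (by linarith)
  have h1 : (((box d N).filter (fun s => ¬ gam a b s = 0)).card : ℤ) ≤
      ∑ s ∈ box d N, gam a b s := by
    rw [Finset.card_filter]
    push_cast
    apply Finset.sum_le_sum
    intro s _
    have := gam_nonneg a b s
    split_ifs with h <;> omega
  have h2 := Finset.card_filter_add_card_filter_not (s := box d N) (fun s => gam a b s = 0)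
  rw [card_box] at h2
  have h3 : n ^ d < (2 * N + 1) ^ d := Nat.pow_lt_pow_left (by omega) hd.ne'
  have h4 : n ^ d ≤ ((box d N).filter (fun s => ¬ gam a b s = 0)).card := by
    have : ((box d N).filter (fun s => gam a b s = 0)).card ≤ 1 := hZ1
    omega
  rw [mul_one]
  have h5 : ((n ^ d : ℕ) : ℤ) ≤ ∑ s ∈ box d N, gam a b s := le_trans (by exact_mod_cast h4) h1
  exact_mod_cast h5

/-- Asymptotics of `Σ_{|λ_i| ≤ N} gcd(θ₁(λ₁), …, θ_𝔡(λ_𝔡))` for non-constant affine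
maps `θ_i(x) = a_i x + b_i`. -/
theorem sum_of_gcd_asymptotics
    (dd l : ℕ) (hdd : 0 < dd) (hdl : dd ≤ l)
    (a b : Fin dd → ℤ) (ha : ∀ i, a i ≠ 0) :
    GrowthEquiv
      (fun N : ℕ =>
        ((∑ lam ∈ Fintype.piFinset (fun _ : Fin l => Finset.Icc (-(N : ℤ)) (N : ℤ)),
          Finset.univ.gcd fun i : Fin dd => a i * lam (Fin.castLE hdl i) + b i : ℤ) : ℝ))
      (fun N : ℕ =>
        (N : ℝ) ^ l *
          (if dd = 1 then (N : ℝ) else if dd = 2 then Real.log N else 1)) := by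
  obtain ⟨m, rfl⟩ := Nat.exists_eq_add_of_le hdl
  simp only [GrowthEquiv, GrowthLE, sum_reduce]
  have hC : 1 ≤ CC a b := by unfold CC; omega
  have hC' : (1 : ℝ) ≤ CC a b := by exact_mod_cast hC
  have hF0 : ∀ N, (0 : ℝ) ≤ ((∑ s ∈ box dd N, gam a b s : ℤ) : ℝ) := fun N => by
    exact_mod_cast Finset.sum_nonneg fun s _ => gam_nonneg a b s
  constructor
  · set C := CC a b with hCdef
    have hpow : 1 ≤ (3 * C) ^ (dd + m - 1) := Nat.one_le_pow _ _ (by omega)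
    have hpe : (3 * C) ^ (dd + m) = (3 * C) ^ (dd + m - 1) * (3 * C) := by
      rw [← pow_succ]; congr 1; omega
    have h3C : 3 * C ≤ (3 * C) ^ (dd + m) := by rw [hpe]; nlinarith
    set c := 2 * C * (3 * C) ^ (dd + m) with hc
    have hc3C : 3 * C ≤ c := by rw [hc]; nlinarith
    have hcpos : (1 : ℝ) ≤ c := by exact_mod_cast (by omega : 1 ≤ c)
    refine ⟨c, by omega, fun n => ?_⟩
    apply max_le
    · calc (1 : ℝ) ≤ c * 1 := by linarith
        _ ≤ _ := by gcongr; exact le_max_left _ _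
    rcases Nat.eq_zero_or_pos n with h0 | hn
    · subst h0
      have hbox : box dd 0 = {0} := by
        ext s
        rw [mem_box, Finset.mem_singleton]
        simp [funext_iff]
      rw [hbox, Finset.sum_singleton]
      have hg : gam a b 0 ≤ (C : ℤ) := by
        apply gam_le _ _ _ _ (by positivity)
        intro i
        have := CC_spec a b i
        have := abs_nonneg (a i)
        simp only [Pi.zero_apply, mul_zero, zero_add]
        omega
      have hg' : (gam a b 0 : ℝ) ≤ C := by exact_mod_cast hg
      have hCc : (C : ℝ) ≤ c := by exact_mod_cast (by omega : C ≤ c)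
      calc _ = (gam a b 0 : ℝ) := by simp
        _ ≤ c * 1 := by linarith
        _ ≤ _ := by gcongr; exact le_max_left _ _
    · have hu := upper_sum a b ha n hn
      have hw := weight_bound dd C c n hdd hC (by omega) (by omega) hn
      have hn' : (1 : ℝ) ≤ n := by exact_mod_cast hn
      rw [← hCdef] at hu
      set D : ℝ := (if dd = 1 then ((c * n : ℕ) : ℝ) else
        if dd = 2 then Real.log (c * n : ℕ) else 1) with hD
      have hD0 : 0 ≤ D := by
        rw [hD]; split_ifs
        · positivity
        · exact Real.log_natCast_nonneg _
        · norm_num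
      push_cast
      push_cast at hu
      calc _ ≤ (2 * (n : ℝ) + 1) ^ m *
            ((3 * (C * n)) ^ dd * (2 * C * D)) := by
            refine mul_le_mul_of_nonneg_left ?_ (by positivity)
            refine hu.trans ?_
            gcongr
        _ ≤ (3 * (C * n)) ^ m * ((3 * (C * n)) ^ dd * (2 * C * D)) := by
            have : 2 * (n : ℝ) + 1 ≤ 3 * (C * n) := by nlinarith
            gcongr
        _ = (2 * C * (3 * C) ^ (dd + m)) * ((n : ℝ) ^ (dd + m) * D) := by
            simp only [mul_pow, pow_add]; ring
        _ = c * ((n : ℝ) ^ (dd + m) * D) := by rw [hc]; push_cast; rfl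
        _ ≤ c * ((c * n : ℝ) ^ (dd + m) * D) := by
            have : (n : ℝ) ≤ c * n := by nlinarith
            gcongr
        _ ≤ _ := by
            gcongr
            refine le_trans (le_of_eq ?_) (le_max_right _ _)
            rw [hD]
  · -- lower bound
    have main : ∃ c : ℕ, 0 < c ∧ ∀ n : ℕ, 1 ≤ n →
        (n : ℝ) ^ dd * (if dd = 1 then (n : ℝ) else if dd = 2 then Real.log n else 1) ≤
          c * ((∑ s ∈ box dd (c * n), gam a b s : ℤ) : ℝ) := by
      have hB : ∀ i, |b i| ≤ (CC a b : ℤ) := fun i => by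
        have := CC_spec a b i
        have := abs_nonneg (a i)
        omega
      by_cases h1 : dd = 1
      · subst h1
        refine ⟨2 + CC a b, by omega, fun n hn => ?_⟩
        have := lower_one a b ha n ((2 + CC a b) * n) (CC a b) hn hB le_rfl
        rw [if_pos rfl]
        refine this.trans (le_mul_of_one_le_left (hF0 _) ?_)
        push_cast
        linarith
      by_cases h2 : dd = 2
      · subst h2
        let A : ℕ := ∏ i, (a i).natAbs
        have hA : 1 ≤ A := Finset.prod_pos fun i _ => Int.natAbs_pos.mpr (ha i)
        have hdvd : ∀ i, a i ∣ A := fun i => by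
          rw [← Int.natAbs_dvd]
          exact_mod_cast Finset.dvd_prod_of_mem (fun i => (a i).natAbs) (Finset.mem_univ i)
        have hGp : 1 ≤ 4 * (9 * CC a b ^ 2) := by
          have : 0 < CC a b ^ 2 := by positivity
          omega
        set c := 4 * (9 * CC a b ^ 2) * ((1 + CC a b) * A) with hc
        refine ⟨c, by positivity, fun n hn => ?_⟩
        have := lower_two a b ha n (c * n) A (CC a b) hA hdvd hB (by
          rw [hc, ← mul_assoc (1 + CC a b)]
          exact Nat.mul_le_mul_right n (Nat.le_mul_of_pos_left _ hGp))
        rw [if_neg h1, if_pos rfl]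
        refine this.trans ?_
        have h5 : 4 * (9 * CC a b ^ 2) ≤ c := by
          rw [hc]
          exact le_mul_of_one_le_right (by positivity) (by nlinarith)
        have h6 : (4 : ℝ) * (9 * CC a b ^ 2 : ℕ) ≤ c := by exact_mod_cast h5
        exact mul_le_mul_of_nonneg_right h6 (hF0 _)
      · refine ⟨1, one_pos, fun n hn => ?_⟩
        rw [if_neg h1, if_neg h2]
        have := lower_many dd hdd a b ha n (1 * n) (by omega)
        simpa using this
    obtain ⟨c, hc, hmain⟩ := main
    refine ⟨c, hc, fun n => ?_⟩
    have hcpos : (1 : ℝ) ≤ c := by exact_mod_cast hc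
    have hone : (1 : ℝ) ≤ c * max 1 (((((2 * (c * n : ℕ) + 1) ^ m *
        ∑ s ∈ box dd (c * n), gam a b s : ℤ)) : ℝ)) := by
      calc (1 : ℝ) ≤ c * 1 := by linarith
        _ ≤ _ := by gcongr; exact le_max_left _ _
    apply max_le hone
    rcases Nat.eq_zero_or_pos n with h0 | hn
    · refine le_trans ?_ hone
      subst h0
      rw [Nat.cast_zero, zero_pow (by omega), zero_mul]
      exact zero_le_one
    · have h := hmain n hn
      calc _ = (n : ℝ) ^ m * ((n : ℝ) ^ dd *
            (if dd = 1 then (n : ℝ) else if dd = 2 then Real.log n else 1)) := by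
            rw [pow_add]; ring
        _ ≤ (2 * (c * n : ℕ) + 1 : ℝ) ^ m *
            (c * ((∑ s ∈ box dd (c * n), gam a b s : ℤ) : ℝ)) := by
            have h7 : (n : ℝ) ≤ 2 * (c * n : ℕ) + 1 := by
              push_cast
              nlinarith [show (0 : ℝ) ≤ n by positivity]
            have h8 : (n : ℝ) ^ m ≤ (2 * (c * n : ℕ) + 1 : ℝ) ^ m := by gcongr
            refine (mul_le_mul_of_nonneg_left h (by positivity)).trans ?_
            exact mul_le_mul_of_nonneg_right h8 (mul_nonneg (by positivity) (hF0 _))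
        _ = c * ((((2 * (c * n : ℕ) + 1) ^ m *
            ∑ s ∈ box dd (c * n), gam a b s : ℤ)) : ℝ) := by push_cast; ring
        _ ≤ _ := by gcongr; exact le_max_right _ _
end

section
/- Let m be a positive integer and let φ denote Euler's totient function. Then, as a function of n, the partial sum S_{2,m}(n) = Σ_{0 < i < n, gcd(i,m) = 1} φ(i)/i² satisfies S_{2,m}(n) ≃ ln(n). -/
lemma harm_cast (n : ℕ) : ((harmonic n : ℚ) : ℝ) = ∑ i ∈ Finset.range n, ((i : ℝ) + 1)⁻¹ := by
  simp [harmonic]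

/-- The Dirichlet convolution identity behind the lower bound. -/
lemma conv_identity (n : ℕ) (hn : 0 < n) :
    ∑ p ∈ n.divisorsAntidiagonal, (Nat.totient p.1 : ℝ) / (p.1 : ℝ) ^ 2 * ((p.2 : ℝ) ^ 2)⁻¹
      = (n : ℝ)⁻¹ := by
  have h1 : ∀ p ∈ n.divisorsAntidiagonal,
      (Nat.totient p.1 : ℝ) / (p.1 : ℝ) ^ 2 * ((p.2 : ℝ) ^ 2)⁻¹
        = (Nat.totient p.1 : ℝ) * ((n : ℝ) ^ 2)⁻¹ := by
    intro p hp
    have h := (Nat.mem_divisorsAntidiagonal.mp hp).1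
    rw [← h]
    push_cast
    rw [mul_pow, mul_inv, div_eq_mul_inv, mul_assoc]
  rw [Finset.sum_congr rfl h1, ← Finset.sum_mul,
    Nat.sum_divisorsAntidiagonal (fun d _ => (Nat.totient d : ℝ)), ← Nat.cast_sum,
    Nat.sum_totient]
  have : (n : ℝ) ≠ 0 := by positivity
  field_simp

lemma conv_bound (m N : ℕ) (T : Finset ℕ) (hT : ∀ n ∈ T, 0 < n ∧ n < N ∧ Nat.gcd n m = 1) :
    ∑ n ∈ T, (n : ℝ)⁻¹ ≤ (∑ i ∈ Finset.Ioo 0 N,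
        if Nat.gcd i m = 1 then (Nat.totient i : ℝ) / (i : ℝ) ^ 2 else 0) * 2 := by
  have hs : ∑ j ∈ Finset.Ioo 0 N, ((j : ℝ) ^ 2)⁻¹ ≤ 2 := by
    have := sum_Ioo_inv_sq_le (α := ℝ) 0 N
    simpa using this
  have hnn : 0 ≤ ∑ i ∈ Finset.Ioo 0 N,
        if Nat.gcd i m = 1 then (Nat.totient i : ℝ) / (i : ℝ) ^ 2 else 0 := by
    apply Finset.sum_nonneg
    intro i _
    split_ifs <;> positivity
  refine le_trans ?_ (mul_le_mul_of_nonneg_left hs hnn)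
  rw [Finset.sum_mul_sum, ← Finset.sum_product']
  have h1 : ∑ n ∈ T, (n : ℝ)⁻¹ = ∑ n ∈ T, ∑ p ∈ n.divisorsAntidiagonal,
      (if Nat.gcd p.1 m = 1 then (Nat.totient p.1 : ℝ) / (p.1 : ℝ) ^ 2 else 0)
        * ((p.2 : ℝ) ^ 2)⁻¹ := by
    apply Finset.sum_congr rfl
    intro n hn
    rw [← conv_identity n (hT n hn).1]
    apply Finset.sum_congr rfl
    intro p hp
    have h := (Nat.mem_divisorsAntidiagonal.mp hp).1
    have hc : Nat.gcd p.1 m = 1 :=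
      Nat.Coprime.coprime_dvd_left (Dvd.intro _ h) (hT n hn).2.2
    rw [if_pos hc]
  rw [h1, ← Finset.sum_biUnion]
  · apply Finset.sum_le_sum_of_subset_of_nonneg
    · intro p hp
      obtain ⟨n, hn, hp⟩ := Finset.mem_biUnion.mp hp
      obtain ⟨h, h0⟩ := Nat.mem_divisorsAntidiagonal.mp hp
      have hN := (hT n hn).2.1
      have a := Nat.le_of_dvd (hT n hn).1 (Dvd.intro _ h)
      have b := Nat.le_of_dvd (hT n hn).1 (Dvd.intro_left _ h)
      have a0 : p.1 ≠ 0 := by rintro h'; rw [h'] at h; omega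
      have b0 : p.2 ≠ 0 := by rintro h'; rw [h'] at h; omega
      simp only [Finset.mem_product, Finset.mem_Ioo]
      omega
    · intro p _ _
      split_ifs <;> positivity
  · intro a _ b _ hab
    rw [Function.onFun, Finset.disjoint_left]
    intro p hp hq
    exact hab ((Nat.mem_divisorsAntidiagonal.mp hp).1.symm.trans
      (Nat.mem_divisorsAntidiagonal.mp hq).1)

lemma lower_bound (m : ℕ) (hm : 0 < m) (n : ℕ) (hn : 0 < n) :
    Real.log n ≤ (2 * m : ℕ) * (∑ i ∈ Finset.Ioo 0 (2 * m * n),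
        if Nat.gcd i m = 1 then (Nat.totient i : ℝ) / (i : ℝ) ^ 2 else 0) := by
  have hm' : (0 : ℝ) < m := by exact_mod_cast hm
  have h1 := conv_bound m (2 * m * n) ((Finset.range n).image (fun k => m * k + 1)) (by
    intro x hx
    obtain ⟨k, hk, rfl⟩ := Finset.mem_image.mp hx
    have hk := Finset.mem_range.mp hk
    refine ⟨by omega, ?_, by simp⟩
    nlinarith [Nat.mul_le_mul_left m hk])
  rw [Finset.sum_image (by
    intro a _ b _ hab
    exact Nat.eq_of_mul_eq_mul_left hm (Nat.succ_injective hab))] at h1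
  have h2 : (m : ℝ)⁻¹ * ∑ k ∈ Finset.range n, ((k : ℝ) + 1)⁻¹
      ≤ ∑ k ∈ Finset.range n, (((m * k + 1 : ℕ)) : ℝ)⁻¹ := by
    rw [Finset.mul_sum]
    apply Finset.sum_le_sum
    intro k _
    rw [← mul_inv]
    apply inv_anti₀ (by positivity)
    have : (1 : ℝ) ≤ m := by exact_mod_cast hm
    push_cast
    linarith
  have h3 := log_add_one_le_harmonic n
  rw [harm_cast] at h3
  have h4 : Real.log n ≤ Real.log ((n + 1 : ℕ) : ℝ) :=
    Real.log_le_log (by exact_mod_cast hn) (by push_cast; linarith)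
  have h5 := (inv_mul_le_iff₀ hm').mp (h2.trans h1)
  push_cast at *
  linarith

/-- The partial sums `S_{2,m}(n) = Σ_{0 < i < n, gcd(i,m) = 1} φ(i)/i²` grow like `ln n`. -/
theorem totient_partial_sum_two (m : ℕ) (hm : 0 < m) :
    GrowthEquiv
      (fun n : ℕ => ∑ i ∈ Finset.Ioo 0 n,
        if Nat.gcd i m = 1 then (Nat.totient i : ℝ) / (i : ℝ) ^ 2 else 0)
      (fun n : ℕ => Real.log n) := by
  constructor
  · refine ⟨2, by norm_num, fun n => ?_⟩
    have hS : (∑ i ∈ Finset.Ioo 0 n,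
        if Nat.gcd i m = 1 then (Nat.totient i : ℝ) / (i : ℝ) ^ 2 else 0) ≤
        1 + Real.log n := by
      have h := harmonic_le_one_add_log n
      rw [harm_cast] at h
      refine le_trans ?_ h
      have h2 : ∑ i ∈ Finset.range n, ((i : ℝ) + 1)⁻¹ = ∑ i ∈ Finset.Ioc 0 n, (i : ℝ)⁻¹ := by
        rw [← harm_cast, harmonic_eq_sum_Icc]
        push_cast
        rfl
      rw [h2]
      refine le_trans (Finset.sum_le_sum (g := fun i : ℕ => (i : ℝ)⁻¹) ?_)
        (Finset.sum_le_sum_of_subset_of_nonneg Finset.Ioo_subset_Ioc_self ?_)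
      · intro i hi
        have hi0 : (0 : ℝ) < i := by exact_mod_cast (Finset.mem_Ioo.mp hi).1
        split_ifs
        · have : (Nat.totient i : ℝ) ≤ i := by exact_mod_cast Nat.totient_le i
          rw [div_le_iff₀ (by positivity)]
          calc (Nat.totient i : ℝ) ≤ i := this
            _ = (i : ℝ)⁻¹ * (i : ℝ) ^ 2 := by field_simp
        · positivity
      · intro i _ _
        positivity
    have hl : Real.log n ≤ Real.log ((2 * n : ℕ) : ℝ) := by
      rcases Nat.eq_zero_or_pos n with rfl | hn
      · simp
      · apply Real.log_le_log (by exact_mod_cast hn)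
        exact_mod_cast (by omega : n ≤ 2 * n)
    have a := le_max_left 1 (Real.log ((2 * n : ℕ) : ℝ))
    have b := le_max_right 1 (Real.log ((2 * n : ℕ) : ℝ))
    refine max_le ?_ ?_
    · push_cast at *
      linarith
    · refine hS.trans ?_
      push_cast at *
      linarith
  · refine ⟨2 * m, by omega, fun n => ?_⟩
    have hc : (1 : ℝ) ≤ (2 * m : ℕ) := by exact_mod_cast (by omega : 1 ≤ 2 * m)
    refine max_le ?_ ?_
    · exact one_le_mul_of_one_le_of_one_le hc (le_max_left _ _)
    · rcases Nat.eq_zero_or_pos n with rfl | hn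
      · simp only [Nat.cast_zero, Real.log_zero]
        positivity
      · refine (lower_bound m hm n hn).trans ?_
        exact mul_le_mul_of_nonneg_left (le_max_right _ _) (by positivity)
end
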